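/- arXiv:2109.02835 — 2 statements merged into one kernel-verified Lean document; each statement's English description precedes it below -/
import Mathlib

section
/- For all nonnegative integers a and b, in ℤ[q]: RGF₀(L6(a,b);q) · ∏_{m∈N} [m]_q · ∏_{m∈N'} [m]_q · ∏_{m∈N} [m]_q = ∏_{m∈N} [a+m]_q · ∏_{m∈N'} [a+b+m]_q · ∏_{m∈N} [b+m]_q, where N is the multiset {1, 2, 3, 4, 4, 5, 6, 7} and N' is the multiset {5, 6, 7, 8, 8, 9, 10, 11}. -/
noncomputable section

namespace CL

variable {N : Type} [DecidableEq N] [Fintype N]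

/-- One-step relation generating the partial order on the poset of positions. -/
def step (adj : N → N → Prop) (pos : Finset (N × ℕ)) (x y : N × ℕ) : Prop :=
  x ∈ pos ∧ y ∈ pos ∧ adj x.1 y.1 ∧ y.2 = x.2 + 1

/-- The partial order on positions, generated by `step`. -/
def ple (adj : N → N → Prop) (pos : Finset (N × ℕ)) : N × ℕ → N × ℕ → Prop :=
  Relation.ReflTransGen (step adj pos)

/-- The lattice of `ℕ`-labellings of the positions which are bounded by `k`, order-reversing,
and satisfy a further constraint `extra`. -/
def Elt (adj : N → N → Prop) (pos : Finset (N × ℕ)) (k : ℕ)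
    (extra : ({x : N × ℕ // x ∈ pos} → ℕ) → Prop) : Type :=
  {c : {x : N × ℕ // x ∈ pos} → ℕ //
    (∀ x, c x ≤ k) ∧ (∀ x y, ple adj pos y.1 x.1 → c x ≤ c y) ∧ extra c}

variable {adj : N → N → Prop} {pos : Finset (N × ℕ)} {k : ℕ}
  {extra : ({x : N × ℕ // x ∈ pos} → ℕ) → Prop}

instance : Finite (Elt adj pos k extra) := by
  apply Finite.of_injective
    (fun c : Elt adj pos k extra =>
      fun x => (⟨c.1 x, Nat.lt_succ_of_le (c.2.1 x)⟩ : Fin (k + 1)))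
  intro c d h
  apply Subtype.ext
  funext x
  exact congrArg Fin.val (congrFun h x)

instance : Fintype (Elt adj pos k extra) := Fintype.ofFinite _

instance : DecidableEq (Elt adj pos k extra) := by unfold Elt; infer_instance

/-- Componentwise comparison of labellings. -/
def elLe (r s : Elt adj pos k extra) : Prop := ∀ x, r.1 x ≤ s.1 x

/-- The covering edge of color `i`: exactly one entry, at a position of color `i`,
is increased by one. -/
def edge (i : N) (r s : Elt adj pos k extra) : Prop :=
  ∃ x : {x : N × ℕ // x ∈ pos}, x.1.1 = i ∧ s.1 x = r.1 x + 1 ∧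
    ∀ y, y ≠ x → s.1 y = r.1 y

instance (i : N) (r s : Elt adj pos k extra) : Decidable (edge i r s) := by
  unfold edge; infer_instance

/-- The rank function: the sum of all entries. -/
def rk (t : Elt adj pos k extra) : ℕ := ∑ x ∈ pos.attach, t.1 x

/-- The connected component of `t` in the graph of color-`i` covering edges. -/
def comp (i : N) (t : Elt adj pos k extra) : Set (Elt adj pos k extra) :=
  {s | Relation.ReflTransGen (fun a b => edge i a b ∨ edge i b a) t s}

/-- The integer `m_i(t) = (ρ(t) − min ρ on comp_i(t)) − (max ρ on comp_i(t) − ρ(t))`. -/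
def mwt (i : N) (t : Elt adj pos k extra) : ℤ :=
  ((rk t : ℤ) - ((sInf (rk '' comp i t) : ℕ) : ℤ)) -
    (((sSup (rk '' comp i t) : ℕ) : ℤ) - (rk t : ℤ))

end CL

/-! ### Type `E₆` data -/

/-- The nodes `1', 2', 3', 4', 5', 6'` of the `E₆` Dynkin diagram. -/
inductive N6 : Type
  | m1 | m2 | m3 | m4 | m5 | m6
  deriving DecidableEq

instance : Fintype N6 where
  elems := {N6.m1, N6.m2, N6.m3, N6.m4, N6.m5, N6.m6}
  complete := by intro x; cases x <;> decide

open N6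

/-- Adjacency in the `E₆` Dynkin diagram: edges `1'-2', 2'-3', 3'-4', 3'-5', 5'-6'`. -/
abbrev adj6 : N6 → N6 → Prop := fun a b =>
  (a, b) ∈ ([(m1, m2), (m2, m3), (m3, m4), (m3, m5), (m5, m6)] : List (N6 × N6)) ∨
  (b, a) ∈ ([(m1, m2), (m2, m3), (m3, m4), (m3, m5), (m5, m6)] : List (N6 × N6))

/-- The Cartan matrix of type `E₆`, indexed by the nodes. -/
def A6 : N6 → N6 → ℤ := fun i j => if i = j then 2 else if adj6 i j then -1 else 0

/-- The 24 (color, rank) positions of the poset `P24 = 𝒫`. -/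
def pos24 : Finset (N6 × ℕ) :=
  {(m1, 0), (m2, 1), (m3, 2), (m4, 3), (m5, 3), (m3, 4), (m6, 4), (m2, 5), (m5, 5),
   (m1, 6), (m3, 6), (m2, 7), (m4, 7), (m1, 8), (m3, 8), (m2, 9), (m5, 9), (m3, 10),
   (m6, 10), (m4, 11), (m5, 11), (m3, 12), (m2, 13), (m1, 14)}

/-- The 16 (color, rank) positions of the minuscule poset `P16' = P_{E₆}(ω₁')`. -/
def pos16p : Finset (N6 × ℕ) :=
  {(m6, 0), (m5, 1), (m3, 2), (m2, 3), (m4, 3), (m1, 4), (m3, 4), (m2, 5), (m5, 5),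
   (m3, 6), (m6, 6), (m4, 7), (m5, 7), (m3, 8), (m2, 9), (m1, 10)}

/-- The 16 (color, rank) positions of the minuscule poset `P16'' = P_{E₆}(ω₆')`. -/
def pos16pp : Finset (N6 × ℕ) :=
  {(m1, 0), (m2, 1), (m3, 2), (m4, 3), (m5, 3), (m3, 4), (m6, 4), (m2, 5), (m5, 5),
   (m1, 6), (m3, 6), (m2, 7), (m4, 7), (m3, 8), (m5, 9), (m6, 10)}

/-- The extra constraints on elements of `L6(a,b)`: `c((1',8)) ≤ a` and `c((1',6)) ≥ a`. -/
def extra6 (a : ℕ) : ({x : N6 × ℕ // x ∈ pos24} → ℕ) → Prop := fun c =>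
  c ⟨(m1, 8), by decide⟩ ≤ a ∧ a ≤ c ⟨(m1, 6), by decide⟩

/-- The lattice `L6(a,b) = L_{E₆}(aω₁' + bω₆')`. -/
abbrev L6ab (a b : ℕ) : Type := CL.Elt adj6 pos24 (a + b) (extra6 a)

/-- The lattice `L6'(k) = L_{E₆}(kω₁')`. -/
abbrev L6p (k : ℕ) : Type := CL.Elt adj6 pos16p k (fun _ => True)

/-- The lattice `L6''(k) = L_{E₆}(kω₆')`. -/
abbrev L6pp (k : ℕ) : Type := CL.Elt adj6 pos16pp k (fun _ => True)

/-- The `q`-integer `[m]_q = 1 + q + ⋯ + q^{m−1}` in `ℤ[q]`. -/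
def qint (m : ℕ) : Polynomial ℤ := ∑ i ∈ Finset.range m, Polynomial.X ^ i

/-- The first multiset of `q`-integer indices for `E₆`. -/
def NA : List ℕ := [1, 2, 3, 4, 4, 5, 6, 7]

/-- The second multiset of `q`-integer indices for `E₆`. -/
def NB : List ℕ := [5, 6, 7, 8, 8, 9, 10, 11]

/-! ### Order ideals as bit masks, transfer operators -/

namespace S17

/-- bitmask inclusion -/
def subm (m' m : ℕ) : Bool := Nat.beq (Nat.land m' m) m'

/-- ideals containing `(1',6)`, with normalized size -/
def LA : List (ℕ × ℕ) :=
  [(703, 0), (767, 1), (1023, 2), (2047, 3), (4095, 4), (6143, 4), (8191, 5), (12287, 5),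
   (16383, 6), (24575, 6), (32767, 7), (65535, 8), (90111, 7), (98303, 8), (131071, 9),
   (262143, 10), (352255, 8), (360447, 9), (393215, 10), (524287, 11), (786431, 11),
   (1048575, 12), (1572863, 12), (2097151, 13), (4194303, 14), (8388607, 15), (16777215, 16)]

/-- ideals not containing `(1',8)`, with size -/
def LB : List (ℕ × ℕ) :=
  [(0, 0), (1, 1), (3, 2), (7, 3), (15, 4), (23, 4), (31, 5), (63, 6), (87, 5), (95, 6),
   (127, 7), (191, 7), (255, 8), (383, 8), (511, 9), (703, 8), (767, 9), (1023, 10),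
   (1535, 10), (2047, 11), (4095, 12), (5631, 11), (6143, 12), (8191, 13), (24575, 14),
   (90111, 15), (352255, 16)]

/-- the full mask -/
def top24 : ℕ := 16777215

section
variable {R : Type*} [CommSemiring R]

/-- transfer operator -/
def T (q : R) (L : List (ℕ × ℕ)) (f : ℕ → R) (m : ℕ) : R :=
  (L.map fun s => if subm s.1 m then q ^ s.2 * f s.1 else 0).sum

/-- dual transfer operator -/
def U (q : R) (L : List (ℕ × ℕ)) (w : ℕ × ℕ → R) (s' : ℕ × ℕ) : R :=
  q ^ s'.2 * (L.map fun s => if subm s'.1 s.1 then w s else 0).sum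

/-- The `b`-phase vector. -/
def V (q : R) (b : ℕ) : ℕ → R := (T q LB)^[b] (fun _ => 1)

/-- normalized generating function -/
def G (q : R) (a b : ℕ) : R := (T q LA)^[a] (V q b) top24

/-- `q`-integers in a semiring -/
def qi (q : R) (m : ℕ) : R := ∑ i ∈ Finset.range m, q ^ i

/-- constant denominator -/
def den (q : R) : R := (NA.map (qi q)).prod * (NB.map (qi q)).prod * (NA.map (qi q)).prod

/-- right side -/
def rhs (q : R) (a b : ℕ) : R :=
  (NA.map fun m => qi q (a + m)).prod * (NB.map fun m => qi q (a + b + m)).prod *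
      (NA.map fun m => qi q (b + m)).prod

theorem sum_swap {α β : Type*} (L : List α) (L' : List β) (h : α → β → R) :
    (L.map fun x => (L'.map fun y => h x y).sum).sum =
      (L'.map fun y => (L.map fun x => h x y).sum).sum := by
  induction L with
  | nil => simp
  | cons x L ih => simp [ih, List.sum_map_add]

theorem dual (q : R) (L : List (ℕ × ℕ)) (w : ℕ × ℕ → R) (g : ℕ → R) :
    (L.map fun s => w s * T q L g s.1).sum = (L.map fun s => U q L w s * g s.1).sum := by
  have h1 : ∀ s : ℕ × ℕ, w s * T q L g s.1 =
      (L.map fun s' => if subm s'.1 s.1 then q ^ s'.2 * w s * g s'.1 else 0).sum := by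
    intro s
    rw [T, ← List.sum_map_mul_left]
    congr 1
    apply List.map_congr_left
    intro s' _
    split_ifs <;> ring
  have h2 : ∀ s' : ℕ × ℕ, U q L w s' * g s'.1 =
      (L.map fun s => if subm s'.1 s.1 then q ^ s'.2 * w s * g s'.1 else 0).sum := by
    intro s
    rw [U, mul_comm (q ^ s.2), mul_assoc, ← List.sum_map_mul_right]
    congr 1
    apply List.map_congr_left
    intro s' _
    split_ifs <;> ring
  simp only [h1, h2]
  exact sum_swap L L _

/-- initial dual vector -/
def w0 (s : ℕ × ℕ) : R := if Nat.beq s.1 top24 then 1 else 0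

theorem G_dual (q : R) (g : ℕ → R) (a : ℕ) : (T q LA)^[a] g top24 =
    (LA.map fun s => ((U q LA)^[a] w0) s * g s.1).sum := by
  induction a generalizing g with
  | zero => simp [LA, w0, top24]
  | succ a ih =>
    rw [Function.iterate_succ_apply, ih, Function.iterate_succ_apply', dual]

end

/-! ### Kernel computation -/

/-- evaluate a number before passing it on -/
def force {α : Type} (n : ℕ) (k : ℕ → α) : α :=
  Nat.rec (motive := fun _ => α) (k 0) (fun p _ => k (p + 1)) n

theorem force_eq {α : Type} (n : ℕ) (k : ℕ → α) : force n k = k n := by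
  cases n <;> rfl

/-- evaluate a list before passing it on -/
def forceL {α : Type} (l : List ℕ) : (List ℕ → α) → α :=
  List.rec (motive := fun _ => (List ℕ → α) → α) (fun k => k [])
    (fun x _ ih k => force x fun x' => ih fun xs' => k (x' :: xs')) l

theorem forceL_eq {α : Type} (l : List ℕ) (k : List ℕ → α) : forceL l k = k l := by
  induction l generalizing k with
  | nil => rfl
  | cons x xs ih =>
    show force x (fun x' => forceL xs fun xs' => k (x' :: xs')) = _
    rw [force_eq, ih]

/-- one row of the transfer operator -/
def rowT (q m : ℕ) : List (ℕ × ℕ) → List ℕ → ℕ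
  | s :: L, v :: vs => Nat.add (bif subm s.1 m then Nat.mul (Nat.pow q s.2) v else 0) (rowT q m L vs)
  | _, _ => 0

/-- one row of the dual operator -/
def rowU (m : ℕ) : List (ℕ × ℕ) → List ℕ → ℕ
  | s :: L, v :: vs => Nat.add (bif subm m s.1 then v else 0) (rowU m L vs)
  | _, _ => 0

/-- dot product -/
def dot : List ℕ → List ℕ → ℕ
  | u :: us, v :: vs => Nat.add (Nat.mul u v) (dot us vs)
  | _, _ => 0

/-- transfer step on lists -/
def stepT (q : ℕ) (L M : List (ℕ × ℕ)) (vs : List ℕ) : List ℕ := M.map fun s => rowT q s.1 L vs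

/-- dual step on lists -/
def stepU (q : ℕ) (L : List (ℕ × ℕ)) (ws : List ℕ) : List ℕ :=
  L.map fun s => Nat.mul (Nat.pow q s.2) (rowU s.1 L ws)

theorem rowT_eq (q m : ℕ) (L : List (ℕ × ℕ)) (f : ℕ → ℕ) :
    rowT q m L (L.map fun s => f s.1) = T q L f m := by
  induction L with
  | nil => rfl
  | cons s L ih =>
    simp only [List.map_cons, rowT, ih, T, List.sum_cons]
    cases subm s.1 m <;> rfl

theorem rowU_eq (m : ℕ) (L : List (ℕ × ℕ)) (w : ℕ × ℕ → ℕ) :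
    rowU m L (L.map w) = (L.map fun s => if subm m s.1 then w s else 0).sum := by
  induction L with
  | nil => rfl
  | cons s L ih =>
    simp only [List.map_cons, rowU, ih, List.sum_cons]
    cases subm m s.1 <;> rfl

theorem dot_eq (L : List (ℕ × ℕ)) (w g : ℕ × ℕ → ℕ) :
    dot (L.map w) (L.map g) = (L.map fun s => w s * g s).sum := by
  induction L with
  | nil => rfl
  | cons s L ih => simp only [List.map_cons, dot, ih, List.sum_cons]; rfl

theorem stepT_eq (q : ℕ) (L M : List (ℕ × ℕ)) (f : ℕ → ℕ) :
    stepT q L M (L.map fun s => f s.1) = M.map fun s => T q L f s.1 := by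
  simp only [stepT, rowT_eq]

theorem stepU_eq (q : ℕ) (L : List (ℕ × ℕ)) (w : ℕ × ℕ → ℕ) :
    stepU q L (L.map w) = L.map (U q L w) := by
  simp only [stepU, rowU_eq]; rfl

/-- `q`-integer, Horner style -/
def qn (q : ℕ) : ℕ → ℕ
  | 0 => 0
  | m + 1 => Nat.add (Nat.mul q (qn q m)) 1

theorem qn_eq (q m : ℕ) : qn q m = qi q m := by
  induction m with
  | zero => rfl
  | succ m ih =>
    rw [qi, Finset.sum_range_succ', Finset.sum_congr rfl (fun i _ => pow_succ' q i),
      ← Finset.mul_sum]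
    simp only [qn, ih]; simp [qi]

/-- product of a list of looked up values -/
def lprod (tab : List ℕ) (k : ℕ) : List ℕ → ℕ
  | [] => 1
  | m :: ms => Nat.mul (tab.getD (Nat.add k m) 0) (lprod tab k ms)

/-- check all `a` in the list of dual vectors, for a given `b` -/
def chkA (tab : List ℕ) (d : ℕ) (va : List ℕ) (b : ℕ) : List (List ℕ) → ℕ → Bool
  | [], _ => true
  | w :: ws, a => (Nat.beq (Nat.mul (dot w va) d)
      (Nat.mul (Nat.mul (lprod tab a NA) (lprod tab (Nat.add a b) NB)) (lprod tab b NA)))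
        && chkA tab d va b ws (Nat.succ a)

/-- loop over `b` -/
def chkB (q : ℕ) (tab : List ℕ) (d : ℕ) (ws : List (List ℕ)) : ℕ → ℕ → List ℕ → List ℕ → Bool
  | 0, _, _, _ => true
  | n + 1, b, vb, va => chkA tab d va b ws 0 &&
      forceL (stepT q LB LB vb) fun vb' => forceL (stepT q LB LA vb) fun va' =>
        chkB q tab d ws n (Nat.succ b) vb' va'

/-- build the dual vectors, in reverse -/
def mkW (q : ℕ) {α : Type} : ℕ → List ℕ → List (List ℕ) → (List (List ℕ) → α) → α
  | 0, _, acc, k => k acc.reverse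
  | n + 1, w, acc, k => forceL (stepU q LA w) fun w' => mkW q n w' (w :: acc) k

/-- the complete check, for `a, b ≤ 16` -/
def chk (q : ℕ) : Bool :=
  forceL ((List.range 44).map (qn q)) fun tab =>
  force (Nat.mul (Nat.mul (lprod tab 0 NA) (lprod tab 0 NB)) (lprod tab 0 NA)) fun d =>
  mkW q 17 (LA.map w0) [] fun ws =>
  chkB q tab d ws 17 0 (LB.map fun _ => 1) (LA.map fun _ => 1)

theorem chk_one : chk 1 = true := by decide +kernel

theorem chk_big : chk 340282366920938463474832468742110117657 = true := by decide +kernel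

theorem mkW_eq (q : ℕ) {α : Type} (n : ℕ) (w : List ℕ) (acc : List (List ℕ))
    (k : List (List ℕ) → α) : mkW q n w acc k =
      k (acc.reverse ++ (List.range n).map fun i => (stepU q LA)^[i] w) := by
  induction n generalizing w acc with
  | zero => simp [mkW]
  | succ n ih =>
    rw [mkW, forceL_eq, ih, List.range_succ_eq_map]
    simp [Function.comp_def]

theorem lprod_eq (q k : ℕ) (ms : List ℕ) (h : ∀ m ∈ ms, k + m < 44) :
    lprod ((List.range 44).map (qn q)) k ms = (ms.map fun m => qi q (k + m)).prod := by
  induction ms with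
  | nil => rfl
  | cons m ms ih =>
    have h1 : k + m < 44 := h m (by simp)
    rw [lprod, ih (fun x hx => h x (by simp [hx])), List.map_cons, List.prod_cons]
    have : ((List.range 44).map (qn q)).getD (Nat.add k m) 0 = qi q (k + m) := by
      rw [Nat.add_eq, List.getD_eq_getElem _ _ (by simpa using h1)]
      simp [qn_eq]
    rw [this]; rfl

theorem chkA_spec (tab : List ℕ) (d : ℕ) (va : List ℕ) (b : ℕ) (ws : List (List ℕ)) (a0 : ℕ)
    (h : chkA tab d va b ws a0 = true) (i : ℕ) (hi : i < ws.length) :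
    dot ws[i] va * d = lprod tab (a0 + i) NA * lprod tab (a0 + i + b) NB * lprod tab b NA := by
  induction ws generalizing a0 i with
  | nil => simp at hi
  | cons w ws ih =>
    rw [chkA, Bool.and_eq_true] at h
    cases i with
    | zero => exact Nat.eq_of_beq_eq_true h.1
    | succ i =>
      have := ih (Nat.succ a0) h.2 i (by simpa using hi)
      rw [List.getElem_cons_succ, this]
      rw [show a0 + (i + 1) = a0.succ + i by omega]

theorem chkB_spec (q : ℕ) (tab : List ℕ) (d : ℕ) (ws : List (List ℕ)) (n b0 : ℕ)
    (h : chkB q tab d ws n b0 (LB.map fun s => V q b0 s.1) (LA.map fun s => V q b0 s.1) = true)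
    (j : ℕ) (hj : j < n) :
    chkA tab d (LA.map fun s => V q (b0 + j) s.1) (b0 + j) ws 0 = true := by
  induction n generalizing b0 j with
  | zero => omega
  | succ n ih =>
    rw [chkB, Bool.and_eq_true, forceL_eq, forceL_eq, stepT_eq, stepT_eq] at h
    have hV : T q LB (V q b0) = V q (b0 + 1) := by
      rw [V, V, Function.iterate_succ_apply']
    rw [hV] at h
    cases j with
    | zero => exact h.1
    | succ j =>
      have := ih (b0 + 1) h.2 j (by omega)
      rwa [show b0 + (j + 1) = b0 + 1 + j by omega]

theorem stepU_iter (q : ℕ) (w : ℕ × ℕ → ℕ) (i : ℕ) :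
    (stepU q LA)^[i] (LA.map w) = LA.map ((U q LA)^[i] w) := by
  induction i generalizing w with
  | zero => rfl
  | succ i ih => rw [Function.iterate_succ_apply, stepU_eq, ih, Function.iterate_succ_apply]

theorem chk_spec (q : ℕ) (h : chk q = true) (a b : ℕ) (ha : a < 17) (hb : b < 17) :
    G q a b * den q = rhs q a b := by
  rw [chk, forceL_eq, force_eq, mkW_eq, List.reverse_nil, List.nil_append] at h
  have h1 := chkB_spec q _ _ _ 17 0 h b hb
  rw [Nat.zero_add] at h1
  have h2 := chkA_spec _ _ _ _ _ _ h1 a (by simpa using ha)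
  have e0 : ∀ ms : List ℕ, (ms.map fun m => qi q (0 + m)) = ms.map (qi q) := by
    intro ms; simp
  rw [lprod_eq, lprod_eq, lprod_eq, lprod_eq, lprod_eq, e0, e0, List.getElem_map,
    List.getElem_range, stepU_iter, dot_eq, ← G_dual, Nat.zero_add] at h2
  · exact h2
  all_goals
    intro m hm
    simp only [NA, NB, List.mem_cons, List.not_mem_nil, or_false] at hm
    omega

/-! ### Kronecker substitution -/

theorem kron (B : ℕ) (n : ℕ) : ∀ p r : Polynomial ℕ, p.natDegree < n → r.natDegree < n →
    (∀ i, p.coeff i < B) → (∀ i, r.coeff i < B) → p.eval B = r.eval B → p = r := by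
  induction n with
  | zero => intro p r h; omega
  | succ n ih =>
    intro p r hp hr hpc hrc h
    have ep := Polynomial.divX_mul_X_add p
    have er := Polynomial.divX_mul_X_add r
    have hB : 0 < B := lt_of_le_of_lt (Nat.zero_le _) (hpc 0)
    rw [← ep, ← er] at h
    simp only [Polynomial.eval_add, Polynomial.eval_mul, Polynomial.eval_X,
      Polynomial.eval_C] at h
    have h0 : p.coeff 0 = r.coeff 0 := by
      have := congrArg (· % B) h
      simpa [Nat.add_mod, Nat.mod_eq_of_lt (hpc 0), Nat.mod_eq_of_lt (hrc 0)] using this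
    have h1 : p.divX.eval B = r.divX.eval B := by
      rw [h0] at h
      exact Nat.eq_of_mul_eq_mul_right hB (Nat.add_right_cancel h)
    have h2 : p.divX = r.divX := by
      rcases Nat.eq_zero_or_pos n with rfl | hn
      · have e1 : p.divX = 0 := by
          rw [Polynomial.divX_eq_zero_iff]
          exact Polynomial.eq_C_of_natDegree_eq_zero (by omega)
        have e2 : r.divX = 0 := by
          rw [Polynomial.divX_eq_zero_iff]
          exact Polynomial.eq_C_of_natDegree_eq_zero (by omega)
        rw [e1, e2]
      · apply ih
        · rw [Polynomial.natDegree_divX_eq_natDegree_tsub_one]; omega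
        · rw [Polynomial.natDegree_divX_eq_natDegree_tsub_one]; omega
        · intro i; rw [Polynomial.coeff_divX]; exact hpc _
        · intro i; rw [Polynomial.coeff_divX]; exact hrc _
        · exact h1
    rw [← ep, ← er, h0, h2]

theorem coeff_le_eval_one (p : Polynomial ℕ) (i : ℕ) : p.coeff i ≤ p.eval 1 := by
  rw [Polynomial.eval_eq_sum, Polynomial.sum_def]
  simp only [one_pow, mul_one]
  by_cases h : i ∈ p.support
  · exact Finset.single_le_sum (f := fun j => p.coeff j) (fun _ _ => Nat.zero_le _) h
  · rw [Polynomial.notMem_support_iff.mp h]; exact Nat.zero_le _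

theorem kron' (B : ℕ) (p r : Polynomial ℕ) (h1 : p.eval 1 = r.eval 1) (hb : r.eval 1 < B)
    (h : p.eval B = r.eval B) : p = r := by
  apply kron B (max p.natDegree r.natDegree + 1) p r (by omega) (by omega) _ _ h
  · intro i; exact lt_of_le_of_lt (coeff_le_eval_one p i) (h1 ▸ hb)
  · intro i; exact lt_of_le_of_lt (coeff_le_eval_one r i) hb

section
variable {R S : Type*} [CommSemiring R] [CommSemiring S] (φ : R →+* S)

theorem map_qi (q : R) (m : ℕ) : φ (qi q m) = qi (φ q) m := by
  simp [qi, map_sum, map_pow]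

theorem map_T (q : R) (L : List (ℕ × ℕ)) (f : ℕ → R) (m : ℕ) :
    φ (T q L f m) = T (φ q) L (fun m => φ (f m)) m := by
  rw [T, T, map_list_sum, List.map_map]
  congr 1
  apply List.map_congr_left
  intro s _
  simp only [Function.comp]
  split_ifs <;> simp

theorem map_T_iter (q : R) (L : List (ℕ × ℕ)) (n : ℕ) (f : ℕ → R) (m : ℕ) :
    φ ((T q L)^[n] f m) = (T (φ q) L)^[n] (fun m => φ (f m)) m := by
  induction n generalizing f m with
  | zero => rfl
  | succ n ih =>
    rw [Function.iterate_succ_apply, ih, Function.iterate_succ_apply]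
    rw [show (fun m => φ (T q L f m)) = T (φ q) L fun m => φ (f m) from
      funext fun m => map_T φ q L f m]

theorem map_G (q : R) (a b : ℕ) : φ (G q a b) = G (φ q) a b := by
  rw [G, G, map_T_iter]
  have h : (fun m => φ (V q b m)) = V (φ q) b := by
    funext m
    rw [V, V, map_T_iter]
    simp
  rw [h]

theorem map_prod_qi (q : R) (k : ℕ) (ms : List ℕ) :
    φ ((ms.map fun m => qi q (k + m)).prod) = (ms.map fun m => qi (φ q) (k + m)).prod := by
  rw [map_list_prod, List.map_map]
  simp [Function.comp_def, map_qi]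

theorem map_prod_qi0 (q : R) (ms : List ℕ) :
    φ ((ms.map (qi q)).prod) = (ms.map (qi (φ q))).prod := by
  rw [map_list_prod, List.map_map]
  congr 2
  funext m
  exact map_qi φ q m

theorem map_den (q : R) : φ (den q) = den (φ q) := by
  simp only [den, map_mul, map_prod_qi0]

theorem map_rhs (q : R) (a b : ℕ) : φ (rhs q a b) = rhs (φ q) a b := by
  simp only [rhs, map_mul, map_prod_qi]

end

theorem rhs_one_lt : ∀ a < 17, ∀ b < 17,
    (NA.map fun m => a + m).prod * (NB.map fun m => a + b + m).prod *
      (NA.map fun m => b + m).prod < 340282366920938463474832468742110117657 := by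
  decide +kernel

theorem base_poly (a b : ℕ) (ha : a < 17) (hb : b < 17) :
    G (Polynomial.X : Polynomial ℕ) a b * den (Polynomial.X : Polynomial ℕ) =
      rhs (Polynomial.X : Polynomial ℕ) a b := by
  have ev : ∀ n : ℕ, (G (Polynomial.X : Polynomial ℕ) a b * den Polynomial.X).eval n =
      G n a b * den n := by
    intro n
    have h1 := map_G (Polynomial.evalRingHom n) Polynomial.X a b
    have h2 := map_den (Polynomial.evalRingHom n) Polynomial.X
    simp only [Polynomial.coe_evalRingHom, Polynomial.eval_X] at h1 h2
    rw [Polynomial.eval_mul, h1, h2]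
  have ev' : ∀ n : ℕ, (rhs (Polynomial.X : Polynomial ℕ) a b).eval n = rhs n a b := by
    intro n
    have h1 := map_rhs (Polynomial.evalRingHom n) Polynomial.X a b
    simpa only [Polynomial.coe_evalRingHom, Polynomial.eval_X] using h1
  have q1 : ∀ m, qi (1 : ℕ) m = m := by intro m; simp [qi]
  apply kron' 340282366920938463474832468742110117657
  · rw [ev, ev']; exact chk_spec 1 chk_one a b ha hb
  · rw [ev', rhs]; simp only [q1]; exact rhs_one_lt a ha b hb
  · rw [ev, ev']; exact chk_spec _ chk_big a b ha hb

theorem base_case {R : Type*} [CommSemiring R] (q : R) (a b : ℕ) (ha : a < 17) (hb : b < 17) :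
    G q a b * den q = rhs q a b := by
  have h := congrArg (Polynomial.eval₂RingHom (Nat.castRingHom R) q) (base_poly a b ha hb)
  rw [map_mul, map_G, map_den, map_rhs] at h
  simpa using h

/-! ### Exponential polynomials -/

section field
variable {K : Type*} [Field K] (q : K)

/-- `f a` is a polynomial of degree `< n` in `q ^ a` -/
def EP (n : ℕ) (f : ℕ → K) : Prop :=
  ∃ c : ℕ → K, ∀ a, f a = ∑ j ∈ Finset.range n, c j * (q ^ a) ^ j

theorem EP.zero (n : ℕ) : EP q n (fun _ => 0) := ⟨fun _ => 0, by simp⟩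

variable {q}

theorem EP.add {n : ℕ} {f g : ℕ → K} (hf : EP q n f) (hg : EP q n g) :
    EP q n (fun a => f a + g a) := by
  obtain ⟨c, hc⟩ := hf
  obtain ⟨d, hd⟩ := hg
  refine ⟨fun j => c j + d j, fun a => ?_⟩
  beta_reduce
  rw [hc, hd, ← Finset.sum_add_distrib]
  exact Finset.sum_congr rfl fun j _ => by ring

theorem EP.smul {n : ℕ} {f : ℕ → K} (k : K) (hf : EP q n f) : EP q n (fun a => k * f a) := by
  obtain ⟨c, hc⟩ := hf
  refine ⟨fun j => k * c j, fun a => ?_⟩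
  beta_reduce
  rw [hc, Finset.mul_sum]
  exact Finset.sum_congr rfl fun j _ => by ring

theorem EP.mono {n m : ℕ} (h : n ≤ m) {f : ℕ → K} (hf : EP q n f) : EP q m f := by
  obtain ⟨c, hc⟩ := hf
  refine ⟨fun j => if j < n then c j else 0, fun a => ?_⟩
  beta_reduce
  rw [hc]
  rw [← Finset.sum_subset (Finset.range_mono h)]
  · exact Finset.sum_congr rfl fun j hj => by rw [if_pos (Finset.mem_range.mp hj)]
  · intro j _ hj
    rw [Finset.mem_range] at hj
    rw [if_neg hj, zero_mul]

theorem EP.list_sum {n : ℕ} {α : Type*} (L : List α) (F : α → ℕ → K)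
    (h : ∀ s ∈ L, EP q n (F s)) : EP q n (fun a => (L.map fun s => F s a).sum) := by
  induction L with
  | nil => simpa using EP.zero q n
  | cons s L ih =>
    simp only [List.map_cons, List.sum_cons]
    exact (h s (by simp)).add (ih fun t ht => h t (by simp [ht]))

theorem EP.of_poly {n : ℕ} {f : ℕ → K} (p : Polynomial K) (hp : p.natDegree < n)
    (h : ∀ a, f a = p.eval (q ^ a)) : EP q n f :=
  ⟨p.coeff, fun a => by rw [h, Polynomial.eval_eq_sum_range' hp]⟩

theorem EP.eq_zero (hq : Function.Injective fun n : ℕ => q ^ n) {n : ℕ} {f : ℕ → K}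
    (hf : EP q n f) (h : ∀ a < n, f a = 0) (a : ℕ) : f a = 0 := by
  obtain ⟨c, hc⟩ := hf
  set p : Polynomial K := ∑ j ∈ Finset.range n, Polynomial.C (c j) * Polynomial.X ^ j with hp
  have he : ∀ a, f a = p.eval (q ^ a) := by
    intro a
    rw [hc, hp, Polynomial.eval_finsetSum]
    simp
  have hd : p.degree < n := by
    rw [hp]
    refine lt_of_le_of_lt (Polynomial.degree_sum_le _ _) ?_
    rw [Finset.sup_lt_iff (by exact WithBot.bot_lt_coe n)]
    intro j hj
    refine lt_of_le_of_lt (Polynomial.degree_C_mul_X_pow_le _ _) ?_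
    exact_mod_cast Finset.mem_range.mp hj
  have : p = 0 := by
    apply Polynomial.eq_zero_of_degree_lt_of_eval_index_eq_zero (v := fun n : ℕ => q ^ n)
      (Finset.range n) hq.injOn
    · simpa using hd
    · intro i hi
      rw [← he]
      exact h i (Finset.mem_range.mp hi)
  rw [he, this, Polynomial.eval_zero]

theorem EP.step (hq : Function.Injective fun n : ℕ => q ^ n) {n : ℕ} {f g : ℕ → K}
    (hg : EP q n g) (h : ∀ a, f (a + 1) = q ^ n * f a + g a) : EP q (n + 1) f := by
  obtain ⟨c, hc⟩ := hg
  set e : ℕ → K := fun a => ∑ j ∈ Finset.range n, c j / (q ^ j - q ^ n) * (q ^ a) ^ j with he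
  have h1 : ∀ a, e (a + 1) = q ^ n * e a + g a := by
    intro a
    rw [hc, he]
    simp only
    rw [Finset.mul_sum, ← Finset.sum_add_distrib]
    refine Finset.sum_congr rfl fun j hj => ?_
    have hne : q ^ j - q ^ n ≠ 0 := by
      rw [sub_ne_zero]
      intro hh
      have := hq hh
      rw [Finset.mem_range] at hj
      omega
    have h2 : (q ^ (a + 1)) ^ j = (q ^ a) ^ j * q ^ j := by
      rw [pow_succ, mul_pow]
    rw [h2]
    field_simp
    ring
  have h2 : ∀ a, f a - e a = (f 0 - e 0) * (q ^ a) ^ n := by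
    intro a
    induction a with
    | zero => simp
    | succ a ih =>
      rw [h, h1, show q ^ n * f a + g a - (q ^ n * e a + g a) = q ^ n * (f a - e a) by ring, ih,
        pow_succ q a, mul_pow]
      ring
  refine ⟨fun j => if j < n then c j / (q ^ j - q ^ n) else f 0 - e 0, fun a => ?_⟩
  beta_reduce
  rw [Finset.sum_range_succ, if_neg (lt_irrefl n), ← h2]
  have : (∑ j ∈ Finset.range n, (if j < n then c j / (q ^ j - q ^ n) else f 0 - e 0) *
      (q ^ a) ^ j) = e a := by
    rw [he]
    exact Finset.sum_congr rfl fun j hj => by rw [if_pos (Finset.mem_range.mp hj)]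
  rw [this]
  ring

theorem EP_iter (hq : Function.Injective fun n : ℕ => q ^ n) (L : List (ℕ × ℕ)) (hn : L.Nodup)
    (hr : ∀ s ∈ L, subm s.1 s.1 = true)
    (hm : ∀ s ∈ L, ∀ s' ∈ L, subm s'.1 s.1 = true → s' = s ∨ s'.2 < s.2) (f : ℕ → K) (k : ℕ) :
    ∀ s ∈ L, s.2 = k → EP q (k + 1) (fun n => (T q L)^[n] f s.1) := by
  induction k using Nat.strong_induction_on with
  | _ k ih =>
    intro s hs hk
    refine EP.step hq (g := fun n => ((L.erase s).map fun s' =>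
      if subm s'.1 s.1 then q ^ s'.2 * (T q L)^[n] f s'.1 else 0).sum) ?_ ?_
    · apply EP.list_sum
      intro s' hs'
      rw [hn.mem_erase_iff] at hs'
      by_cases hsub : subm s'.1 s.1 = true
      · simp only [hsub, if_true]
        have hlt : s'.2 < k := by
          rcases hm s hs s' hs'.2 hsub with h | h
          · exact absurd h hs'.1
          · omega
        exact ((ih s'.2 hlt s' hs'.2 rfl).mono (by omega)).smul _
      · simpa [hsub] using EP.zero q k
    · intro n
      rw [Function.iterate_succ_apply', T,
        ((List.perm_cons_erase hs).map _).sum_eq, List.map_cons, List.sum_cons,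
        if_pos (hr s hs), hk]

theorem LA_facts : LA.Nodup ∧ (∀ s ∈ LA, subm s.1 s.1 = true) ∧
    (∀ s ∈ LA, ∀ s' ∈ LA, subm s'.1 s.1 = true → s' = s ∨ s'.2 < s.2) := by decide +kernel

theorem LB_facts : LB.Nodup ∧ (∀ s ∈ LB, subm s.1 s.1 = true) ∧
    (∀ s ∈ LB, ∀ s' ∈ LB, subm s'.1 s.1 = true → s' = s ∨ s'.2 < s.2) := by decide +kernel

theorem LAB_facts : ∀ s ∈ LA, ∃ t ∈ LB, t.2 ≤ 16 ∧ ∀ s' ∈ LB, subm s'.1 s.1 = subm s'.1 t.1 := by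
  decide +kernel

theorem V_EP (hq : Function.Injective fun n : ℕ => q ^ n) (s : ℕ × ℕ) (hs : s ∈ LA) :
    EP q 17 (fun b => V q b s.1) := by
  obtain ⟨t, ht, ht2, h⟩ := LAB_facts s hs
  have e : (fun b => V q b s.1) = fun b => (T q LB)^[b] (fun _ => 1) t.1 := by
    funext b
    cases b with
    | zero => rfl
    | succ b =>
      rw [V, Function.iterate_succ_apply', T, T]
      congr 1
      apply List.map_congr_left
      intro s' hs'
      rw [h s' hs']
  rw [e]
  exact (EP_iter hq LB LB_facts.1 LB_facts.2.1 LB_facts.2.2 _ _ t ht rfl).mono (by omega)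

theorem G_EP_b (hq : Function.Injective fun n : ℕ => q ^ n) (a : ℕ) :
    EP q 17 (fun b => G q a b) := by
  simp only [G, G_dual]
  exact EP.list_sum _ _ fun s hs => (V_EP hq s hs).smul _

theorem G_EP_a (hq : Function.Injective fun n : ℕ => q ^ n) (b : ℕ) :
    EP q 17 (fun a => G q a b) :=
  EP_iter hq LA LA_facts.1 LA_facts.2.1 LA_facts.2.2 (V q b) 16 (16777215, 16)
    (by decide +kernel) rfl

theorem qi_poly (hq1 : q - 1 ≠ 0) (k : ℕ) (ms : List ℕ) :
    ∃ p : Polynomial K, p.natDegree ≤ ms.length ∧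
      ∀ a, (ms.map fun m => qi q (k + a + m)).prod = p.eval (q ^ a) := by
  refine ⟨(ms.map fun m => Polynomial.C (q ^ (k + m) / (q - 1)) * Polynomial.X +
    Polynomial.C (-1 / (q - 1))).prod, ?_, ?_⟩
  · induction ms with
    | nil => simp
    | cons m ms ih =>
      rw [List.map_cons, List.prod_cons]
      refine (Polynomial.natDegree_mul_le).trans ?_
      rw [List.length_cons, add_comm]
      exact Nat.add_le_add ih Polynomial.natDegree_linear_le
  · intro a
    induction ms with
    | nil => simp
    | cons m ms ih =>
      rw [List.map_cons, List.prod_cons, ih, List.map_cons, List.prod_cons, Polynomial.eval_mul]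
      congr 1
      have : qi q (k + a + m) = (q ^ (k + a + m) - 1) / (q - 1) := by
        rw [qi, geom_sum_eq (sub_ne_zero.mp hq1)]
      rw [this]
      simp only [Polynomial.eval_add, Polynomial.eval_mul, Polynomial.eval_C, Polynomial.eval_X]
      field_simp
      ring

theorem rhs_EP_a (hq1 : q - 1 ≠ 0) (b : ℕ) : EP q 17 (fun a => rhs q a b) := by
  obtain ⟨p1, d1, h1⟩ := qi_poly hq1 0 NA
  obtain ⟨p2, d2, h2⟩ := qi_poly hq1 b NB
  have : EP q 17 (fun a => (NA.map fun m => qi q (b + m)).prod *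
      ((NA.map fun m => qi q (0 + a + m)).prod * (NB.map fun m => qi q (b + a + m)).prod)) := by
    apply EP.smul
    refine EP.of_poly (p1 * p2) ?_ ?_
    · refine lt_of_le_of_lt Polynomial.natDegree_mul_le ?_
      simp only [NA, NB, List.length] at d1 d2
      omega
    · intro a
      rw [h1, h2, Polynomial.eval_mul]
  convert this using 2 with a
  rw [rhs]
  simp only [zero_add, add_comm b a]
  ring

theorem rhs_symm (a b : ℕ) : rhs q a b = rhs q b a := by
  rw [rhs, rhs, add_comm a b]
  ring

theorem main_field (hq : Function.Injective fun n : ℕ => q ^ n) (a b : ℕ) :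
    G q a b * den q = rhs q a b := by
  have hq1 : q - 1 ≠ 0 := by
    rw [sub_ne_zero]
    intro h
    have := @hq 1 0 (by simpa using h)
    omega
  have key1 : ∀ b < 17, ∀ a, G q a b * den q = rhs q a b := by
    intro b hb a
    have h : EP q 17 (fun a => den q * G q a b + (-1) * rhs q a b) :=
      ((G_EP_a hq b).smul _).add ((rhs_EP_a hq1 b).smul _)
    have := h.eq_zero hq (fun a ha => by
      have := base_case q a b ha hb
      linear_combination this) a
    linear_combination this
  have h : EP q 17 (fun b => den q * G q a b + (-1) * rhs q a b) := by
    simp only [rhs_symm a]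
    exact ((G_EP_b hq a).smul _).add ((rhs_EP_a hq1 a).smul _)
  have := h.eq_zero hq (fun b hb => by
    have := key1 b hb a
    linear_combination this) b
  linear_combination this

end field

theorem main_poly (a b : ℕ) : G (Polynomial.X : Polynomial ℤ) a b * den Polynomial.X =
    rhs Polynomial.X a b := by
  have hinj := IsFractionRing.injective (Polynomial ℤ) (FractionRing (Polynomial ℤ))
  apply hinj
  rw [map_mul, map_G, map_den, map_rhs]
  apply main_field
  intro i j h
  simp only [← map_pow] at h
  have h2 := congrArg Polynomial.natDegree (hinj h)
  simpa using h2

/-! ### From labellings to multichains of order ideals -/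

/-- lower covers of each position, as bit masks -/
def lcv : List ℕ := [0, 1, 2, 4, 4, 24, 16, 32, 96, 128, 384, 1536, 1024, 2048, 6144, 24576,
  16384, 98304, 65536, 131072, 393216, 1572864, 2097152, 4194304]

/-- order-reversing labellings -/
def anti (c : Fin 24 → ℕ) : Prop :=
  ∀ i j : Fin 24, (lcv.getD j 0).testBit i = true → c j ≤ c i

/-- masks of order ideals -/
def low (m : ℕ) : Prop :=
  ∀ i j : Fin 24, (lcv.getD j 0).testBit i = true → m.testBit j = true → m.testBit i = true

instance (m : ℕ) : Decidable (low m) := by unfold low; infer_instance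

theorem subm_testBit {m' m : ℕ} (h : subm m' m = true) (i : ℕ) (hi : m'.testBit i = true) :
    m.testBit i = true := by
  have h1 : m' &&& m = m' := Nat.eq_of_beq_eq_true h
  rw [← h1, Nat.testBit_and, Bool.and_eq_true] at hi
  exact hi.2

theorem subm_of {m' m : ℕ} (h : ∀ i, m'.testBit i = true → m.testBit i = true) :
    subm m' m = true := by
  have h1 : m' &&& m = m' := by
    apply Nat.eq_of_testBit_eq
    intro i
    rw [Nat.testBit_and]
    cases hi : m'.testBit i
    · rfl
    · rw [h i hi]; rfl
  show Nat.beq (m' &&& m) m' = true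
  rw [h1]
  exact Nat.beq_refl m'

theorem testBit_lt {m : ℕ} (hm : m < 2 ^ 24) {i : ℕ} (hi : m.testBit i = true) : i < 24 := by
  by_contra h
  rw [Nat.testBit_lt_two_pow (lt_of_lt_of_le hm (Nat.pow_le_pow_right (by norm_num)
    (not_lt.mp h)))] at hi
  exact Bool.false_ne_true hi

theorem eq_of_bits {m m' : ℕ} (hm : m < 2 ^ 24) (hm' : m' < 2 ^ 24)
    (h : ∀ i : Fin 24, m.testBit i = m'.testBit i) : m = m' := by
  apply Nat.eq_of_testBit_eq
  intro i
  by_cases hi : i < 24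
  · exact h ⟨i, hi⟩
  · have e1 : m.testBit i = false := by
      by_contra h1
      exact hi (testBit_lt hm (by simpa using h1))
    have e2 : m'.testBit i = false := by
      by_contra h1
      exact hi (testBit_lt hm' (by simpa using h1))
    rw [e1, e2]

/-- the support of a labelling -/
def lev (c : Fin 24 → ℕ) : ℕ := Nat.ofBits fun i : Fin 24 => decide (0 < c i)

theorem lev_lt (c : Fin 24 → ℕ) : lev c < 2 ^ 24 := Nat.ofBits_lt_two_pow _

theorem lev_testBit (c : Fin 24 → ℕ) (i : Fin 24) : (lev c).testBit i = decide (0 < c i) := by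
  rw [lev, Nat.testBit_ofBits_lt _ _ i.2]

theorem lev_testBit_iff (c : Fin 24 → ℕ) (i : Fin 24) : (lev c).testBit i = true ↔ 0 < c i := by
  rw [lev_testBit, decide_eq_true_iff]

/-- labellings corresponding to multichains -/
def good : List (List (ℕ × ℕ)) → ℕ → (Fin 24 → ℕ) → Prop
  | [], _, c => c = 0
  | L :: LS, m, c => lev c ∈ L.map Prod.fst ∧ subm (lev c) m = true ∧
      good LS (lev c) (fun i => c i - 1)

theorem good_supp {LS : List (List (ℕ × ℕ))} {m : ℕ} {c : Fin 24 → ℕ} (h : good LS m c)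
    (i : Fin 24) (hi : 0 < c i) : m.testBit i = true := by
  cases LS with
  | nil => rw [good] at h; rw [h] at hi; simp at hi
  | cons L LS => exact subm_testBit h.2.1 i ((lev_testBit_iff c i).mpr hi)

/-- number of bits -/
def pc (m : ℕ) : ℕ := ∑ i : Fin 24, (m.testBit i).toNat

/-- well-formed lists of ideals -/
def okL (L : List (ℕ × ℕ)) : Prop :=
  (L.map Prod.fst).Nodup ∧ ∀ s ∈ L, s.1 < 2 ^ 24 ∧ s.2 = pc s.1

section
variable {R : Type*} [CommSemiring R]

/-- generating function of multichains -/
def FL (q : R) : List (List (ℕ × ℕ)) → ℕ → R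
  | [] => fun _ => 1
  | L :: LS => T q L (FL q LS)

theorem list_fiber (L : List (ℕ × ℕ)) (hL : (L.map Prod.fst).Nodup)
    (S : Finset (Fin 24 → ℕ)) (hS : ∀ c ∈ S, lev c ∈ L.map Prod.fst) (f : (Fin 24 → ℕ) → R) :
    ∑ c ∈ S, f c = (L.map fun s => ∑ c ∈ S with lev c = s.1, f c).sum := by
  rw [← Finset.sum_fiberwise_of_maps_to (t := (L.map Prod.fst).toFinset) (g := lev)
    (fun c hc => List.mem_toFinset.mpr (hS c hc)), List.sum_toFinset _ hL, List.map_map]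
  rfl

theorem sum_good (q : R) (LS : List (List (ℕ × ℕ))) (hok : ∀ L ∈ LS, okL L) (m : ℕ)
    (S : Finset (Fin 24 → ℕ)) (hS : ∀ c, c ∈ S ↔ good LS m c) :
    ∑ c ∈ S, q ^ (∑ i, c i) = FL q LS m := by
  induction LS generalizing m S with
  | nil =>
    have : S = {0} := by
      ext c
      rw [hS, good, Finset.mem_singleton]
    rw [this]
    simp [FL]
  | cons L LS ih =>
    have hL := hok L (by simp)
    rw [list_fiber L hL.1 S (fun c hc => ((hS c).mp hc).1), FL, T]
    congr 1
    apply List.map_congr_left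
    intro s hs
    obtain ⟨hlt, hpc⟩ := hL.2 s hs
    by_cases hsub : subm s.1 m = true
    · rw [if_pos hsub]
      have hmem : ∀ d, d ∈ (S.filter fun c => lev c = s.1).image (fun c i => c i - 1) ↔
          good LS s.1 d := by
        intro d
        rw [Finset.mem_image]
        constructor
        · rintro ⟨c, hc, rfl⟩
          rw [Finset.mem_filter, hS] at hc
          have := hc.1.2.2
          rwa [hc.2] at this
        · intro hd
          have hl : lev (fun i => d i + (s.1.testBit i).toNat) = s.1 := by
            apply eq_of_bits (lev_lt _) hlt
            intro i
            rw [lev_testBit]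
            cases hb : s.1.testBit i
            · have : d i = 0 := by
                by_contra h0
                have := good_supp hd i (Nat.pos_of_ne_zero h0)
                rw [hb] at this
                exact Bool.false_ne_true this
              simp [this]
            · simp
          have hp : (fun i => d i + (s.1.testBit i).toNat - 1) = d := by
            funext i
            cases hb : s.1.testBit i
            · have : d i = 0 := by
                by_contra h0
                have := good_supp hd i (Nat.pos_of_ne_zero h0)
                rw [hb] at this
                exact Bool.false_ne_true this
              simp [this]
            · simp
          refine ⟨fun i => d i + (s.1.testBit i).toNat, ?_, hp⟩
          rw [Finset.mem_filter, hS]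
          refine ⟨⟨?_, ?_, ?_⟩, hl⟩
          · rw [hl]; exact List.mem_map_of_mem hs
          · rw [hl]; exact hsub
          · rw [hl, hp]; exact hd
      rw [← ih (fun L' h' => hok L' (by simp [h'])) s.1 _ hmem, Finset.sum_image, Finset.mul_sum]
      · refine Finset.sum_congr rfl fun c hc => ?_
        rw [Finset.mem_filter] at hc
        rw [← pow_add, hpc, pc, ← Finset.sum_add_distrib]
        refine congrArg (fun n => q ^ n) (Finset.sum_congr rfl fun i _ => ?_)
        rw [← hc.2, lev_testBit]
        by_cases h0 : 0 < c i
        · simp [h0]; omega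
        · simp [h0]; omega
      · intro c hc c' hc' he
        rw [Finset.mem_coe, Finset.mem_filter] at hc hc'
        funext i
        have h1 := congrFun he i
        have h2 := lev_testBit_iff c i
        have h3 := lev_testBit_iff c' i
        rw [hc.2] at h2
        rw [hc'.2] at h3
        have h4 := h2.symm.trans h3
        beta_reduce at h1
        clear h2 h3 he hc hc' hpc hlt ih hS
        omega
    · rw [if_neg hsub]
      apply Finset.sum_eq_zero
      intro c hc
      rw [Finset.mem_filter, hS] at hc
      exact absurd (hc.2 ▸ hc.1.2.1) hsub

/-- ideals containing `(1',6)`, with size -/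
def LA8 : List (ℕ × ℕ) := LA.map fun s => (s.1, s.2 + 8)

theorem T_LA8 (q : R) (f : ℕ → R) : T q LA8 f = fun m => q ^ 8 * T q LA f m := by
  funext m
  rw [T, T, LA8, List.map_map, ← List.sum_map_mul_left]
  congr 1
  apply List.map_congr_left
  intro s _
  simp only [Function.comp]
  split_ifs
  · ring
  · ring

theorem T_smul (q k : R) (L : List (ℕ × ℕ)) (f : ℕ → R) :
    T q L (fun m => k * f m) = fun m => k * T q L f m := by
  funext m
  rw [T, T, ← List.sum_map_mul_left]
  congr 1
  apply List.map_congr_left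
  intro s _
  split_ifs
  · ring
  · ring

theorem FL_eq (q : R) (a b : ℕ) :
    FL q (List.replicate a LA8 ++ List.replicate b LB) =
      fun m => q ^ (8 * a) * (T q LA)^[a] (V q b) m := by
  induction a with
  | zero =>
    have : FL q (List.replicate b LB) = V q b := by
      induction b with
      | zero => rfl
      | succ b ih =>
        rw [List.replicate_succ, FL, ih, V, V, Function.iterate_succ_apply']
    simp [this]
  | succ a ih =>
    rw [List.replicate_succ, List.cons_append, FL, ih, T_LA8]
    funext m
    rw [T_smul, Function.iterate_succ_apply']
    ring

end

theorem okA : okL LA8 := by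
  unfold okL pc
  decide +kernel

theorem okB : okL LB := by
  unfold okL pc
  decide +kernel

/-- enumeration of all ideals -/
def enumM : ℕ → List ℕ
  | 0 => [0]
  | n + 1 => enumM n ++
      ((enumM n).filter fun m => subm (lcv.getD n 0) m).map fun m => m + 2 ^ n

theorem lcv_lt : ∀ n < 24, lcv.getD n 0 < 2 ^ n := by decide +kernel

theorem mod_succ (m n : ℕ) : m % 2 ^ (n + 1) = m % 2 ^ n + 2 ^ n * (m.testBit n).toNat := by
  rw [pow_succ, Nat.mod_mul, Nat.toNat_testBit]

theorem enum_complete (m : ℕ) (h : low m) (n : ℕ) (hn : n ≤ 24) : m % 2 ^ n ∈ enumM n := by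
  induction n with
  | zero => simp [enumM, Nat.mod_one]
  | succ n ih =>
    have ih := ih (by omega)
    rw [enumM, List.mem_append, mod_succ]
    cases hb : m.testBit n
    · left; simpa using ih
    · right
      rw [List.mem_map]
      refine ⟨m % 2 ^ n, ?_, by simp⟩
      rw [List.mem_filter]
      refine ⟨ih, subm_of fun i hi => ?_⟩
      have hin : i < n := by
        by_contra hc
        rw [Nat.testBit_lt_two_pow (lt_of_lt_of_le (lcv_lt n (by omega))
          (Nat.pow_le_pow_right (by norm_num) (not_lt.mp hc)))] at hi
        exact Bool.false_ne_true hi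
      rw [Nat.testBit_mod_two_pow]
      have := h ⟨i, by omega⟩ ⟨n, by omega⟩ hi hb
      simp only at this
      simp [hin, this]

theorem enumA : ∀ m ∈ enumM 24, m.testBit 9 = true → m ∈ LA8.map Prod.fst := by decide +kernel

theorem enumB : ∀ m ∈ enumM 24, m.testBit 13 = false → m ∈ LB.map Prod.fst := by decide +kernel

theorem lowA : ∀ m ∈ LA8.map Prod.fst, low m ∧ m.testBit 9 = true := by decide +kernel

theorem lowB : ∀ m ∈ LB.map Prod.fst, low m ∧ m.testBit 13 = false := by decide +kernel

theorem memA (m : ℕ) (hm : m < 2 ^ 24) : m ∈ LA8.map Prod.fst ↔ low m ∧ m.testBit 9 = true := by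
  refine ⟨lowA m, fun h => enumA m ?_ h.2⟩
  have := enum_complete m h.1 24 le_rfl
  rwa [Nat.mod_eq_of_lt hm] at this

theorem memB (m : ℕ) (hm : m < 2 ^ 24) : m ∈ LB.map Prod.fst ↔ low m ∧ m.testBit 13 = false := by
  refine ⟨lowB m, fun h => enumB m ?_ h.2⟩
  have := enum_complete m h.1 24 le_rfl
  rwa [Nat.mod_eq_of_lt hm] at this

theorem anti_iff (c : Fin 24 → ℕ) : anti c ↔ low (lev c) ∧ anti fun i => c i - 1 := by
  constructor
  · intro h
    refine ⟨fun i j hij hj => ?_, fun i j hij => ?_⟩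
    · rw [lev_testBit_iff] at hj ⊢
      have := h i j hij
      omega
    · have := h i j hij
      simp only
      omega
  · rintro ⟨h1, h2⟩ i j hij
    have h3 := h1 i j hij
    rw [lev_testBit_iff, lev_testBit_iff] at h3
    have h4 := h2 i j hij
    simp only at h4
    omega

theorem lev_sub_iff (c : Fin 24 → ℕ) (m : ℕ) :
    subm (lev c) m = true ↔ ∀ i : Fin 24, 0 < c i → m.testBit i = true := by
  constructor
  · intro h i hi
    exact subm_testBit h i ((lev_testBit_iff c i).mpr hi)
  · intro h
    apply subm_of
    intro i hi
    have hi24 := testBit_lt (lev_lt c) hi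
    exact h ⟨i, hi24⟩ ((lev_testBit_iff c ⟨i, hi24⟩).mp hi)

theorem good_iff (a b m : ℕ) (c : Fin 24 → ℕ) :
    good (List.replicate a LA8 ++ List.replicate b LB) m c ↔
      (∀ i, c i ≤ a + b) ∧ anti c ∧ c 13 ≤ a ∧ a ≤ c 9 ∧
        ∀ i : Fin 24, 0 < c i → m.testBit i = true := by
  have t9 : (lev c).testBit 9 = true ↔ 0 < c 9 := lev_testBit_iff c 9
  have t13 : (lev c).testBit 13 = true ↔ 0 < c 13 := lev_testBit_iff c 13
  induction a generalizing m c with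
  | zero =>
    induction b generalizing m c with
    | zero =>
      simp only [List.replicate_zero, List.append_nil, good]
      constructor
      · rintro rfl
        refine ⟨by simp, fun i j _ => le_rfl, by simp, by simp, by simp⟩
      · intro h
        funext i
        have := h.1 i
        simpa using this
    | succ b ih =>
      have ih' : _ ↔ _ := ih (lev c) (fun i => c i - 1) (lev_testBit_iff _ 9) (lev_testBit_iff _ 13)
      rw [List.replicate_zero, List.nil_append] at ih' ⊢
      rw [List.replicate_succ, good, ih', memB _ (lev_lt c), lev_sub_iff, anti_iff c]
      have t13' : (lev c).testBit 13 = false ↔ c 13 = 0 := by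
        rw [← Bool.not_eq_true, t13]; omega
      rw [t13']
      constructor
      · rintro ⟨⟨h1, h2⟩, h3, h4, h5, h6, h7, h8⟩
        refine ⟨fun i => ?_, ⟨h1, h5⟩, by omega, by omega, h3⟩
        have := h4 i
        omega
      · rintro ⟨h1, ⟨h2, h3⟩, h4, h5, h6⟩
        refine ⟨⟨h2, by omega⟩, h6, fun i => ?_, h3, by omega, by omega, fun i hi => ?_⟩
        · have := h1 i
          omega
        · rw [lev_testBit_iff]; omega
  | succ a ih =>
    have ih' : _ ↔ _ := ih (lev c) (fun i => c i - 1) (lev_testBit_iff _ 9) (lev_testBit_iff _ 13)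
    rw [List.replicate_succ, List.cons_append, good, ih', memA _ (lev_lt c), lev_sub_iff,
      anti_iff c, t9]
    constructor
    · rintro ⟨⟨h1, h2⟩, h3, h4, h5, h6, h7, h8⟩
      refine ⟨fun i => ?_, ⟨h1, h5⟩, by omega, by omega, h3⟩
      have := h4 i
      omega
    · rintro ⟨h1, ⟨h2, h3⟩, h4, h5, h6⟩
      refine ⟨⟨h2, by omega⟩, h6, fun i => ?_, h3, by omega, by omega, fun i hi => ?_⟩
      · have := h1 i
        omega
      · rw [lev_testBit_iff]; omega

/-! ### Indexing the positions -/

/-- the positions in order -/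
def posL : List (N6 × ℕ) :=
  [(m1, 0), (m2, 1), (m3, 2), (m4, 3), (m5, 3), (m3, 4), (m6, 4), (m2, 5), (m5, 5),
   (m1, 6), (m3, 6), (m2, 7), (m4, 7), (m1, 8), (m3, 8), (m2, 9), (m5, 9), (m3, 10),
   (m6, 10), (m4, 11), (m5, 11), (m3, 12), (m2, 13), (m1, 14)]

/-- the position with a given index -/
def ev (i : Fin 24) : N6 × ℕ := posL.getD i (m1, 0)

theorem ev_mem : ∀ i, ev i ∈ pos24 := by decide +kernel

theorem ev_inj : ∀ i j, ev i = ev j → i = j := by decide +kernel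

theorem ev_surj : ∀ x ∈ pos24, ∃ i, ev i = x := by decide +kernel

theorem ev_cov : ∀ i j : Fin 24, (lcv.getD j 0).testBit i = true ↔
    (adj6 (ev i).1 (ev j).1 ∧ (ev j).2 = (ev i).2 + 1) := by decide +kernel

/-- positions are indexed by `Fin 24` -/
def pe : Fin 24 ≃ {x : N6 × ℕ // x ∈ pos24} :=
  Equiv.ofBijective (fun i => ⟨ev i, ev_mem i⟩)
    ⟨fun i j h => ev_inj i j (congrArg Subtype.val h), fun x => by
      obtain ⟨i, hi⟩ := ev_surj x.1 x.2
      exact ⟨i, Subtype.ext hi⟩⟩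

theorem pe_val (i : Fin 24) : (pe i).1 = ev i := rfl

theorem anti_pe (c : {x : N6 × ℕ // x ∈ pos24} → ℕ) :
    (∀ x y, CL.ple adj6 pos24 y.1 x.1 → c x ≤ c y) ↔ anti fun i => c (pe i) := by
  constructor
  · intro h i j hij
    apply h
    exact Relation.ReflTransGen.single ⟨ev_mem i, ev_mem j, (ev_cov i j).mp hij⟩
  · intro h x y hxy
    have key : ∀ u v, CL.ple adj6 pos24 u v → ∀ (hu : u ∈ pos24) (hv : v ∈ pos24),
        c ⟨v, hv⟩ ≤ c ⟨u, hu⟩ := by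
      intro u v huv
      induction huv with
      | refl => intro hu hv; exact le_rfl
      | tail _ hs ih =>
        intro hu hv
        refine le_trans ?_ (ih hu hs.1)
        obtain ⟨i, rfl⟩ := ev_surj _ hs.1
        obtain ⟨j, rfl⟩ := ev_surj _ hs.2.1
        exact h i j ((ev_cov i j).mpr hs.2.2)
    exact key y.1 x.1 hxy y.2 x.2

/-- an element of the lattice as a labelling of `Fin 24` -/
def lab {a b : ℕ} (t : L6ab a b) : Fin 24 → ℕ := fun i => t.1 (pe i)

theorem lab_inj {a b : ℕ} : Function.Injective (lab : L6ab a b → Fin 24 → ℕ) := by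
  intro s t h
  apply Subtype.ext
  funext x
  have := congrFun h (pe.symm x)
  simpa [lab] using this

theorem rk_lab {a b : ℕ} (t : L6ab a b) : CL.rk t = ∑ i, lab t i := by
  rw [CL.rk, ← Finset.univ_eq_attach]
  exact (Equiv.sum_comp pe t.1).symm

theorem exists_lab (a b : ℕ) (c : Fin 24 → ℕ) : (∃ t : L6ab a b, lab t = c) ↔
    ((∀ i, c i ≤ a + b) ∧ anti c ∧ c 13 ≤ a ∧ a ≤ c 9) := by
  constructor
  · rintro ⟨t, rfl⟩
    exact ⟨fun i => t.2.1 _, (anti_pe t.1).mp t.2.2.1, t.2.2.2.1, t.2.2.2.2⟩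
  · rintro ⟨h1, h2, h3, h4⟩
    have e : (fun i => (fun x => c (pe.symm x)) (pe i)) = c := by
      funext i; simp
    refine ⟨⟨fun x => c (pe.symm x), fun x => h1 _, ?_, ?_, ?_⟩, e⟩
    · rw [anti_pe, e]; exact h2
    · have : pe.symm ⟨(m1, 8), by decide⟩ = 13 := by
        rw [Equiv.symm_apply_eq]; exact Subtype.ext rfl
      beta_reduce
      rw [this]; exact h3
    · have : pe.symm ⟨(m1, 6), by decide⟩ = 9 := by
        rw [Equiv.symm_apply_eq]; exact Subtype.ext rfl
      beta_reduce
      rw [this]; exact h4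

theorem top_bits : ∀ i : Fin 24, top24.testBit i = true := by decide +kernel

theorem sum_rk (a b : ℕ) : ∑ t : L6ab a b, (Polynomial.X : Polynomial ℤ) ^ CL.rk t =
    Polynomial.X ^ (8 * a) * G Polynomial.X a b := by
  classical
  have h := sum_good (Polynomial.X : Polynomial ℤ) (List.replicate a LA8 ++ List.replicate b LB)
    (by
      intro L hL
      rw [List.mem_append] at hL
      rcases hL with hL | hL
      · rw [List.eq_of_mem_replicate hL]; exact okA
      · rw [List.eq_of_mem_replicate hL]; exact okB) top24
    (Finset.univ.image (lab : L6ab a b → Fin 24 → ℕ)) (by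
      intro c
      rw [good_iff, Finset.mem_image]
      simp only [Finset.mem_univ, true_and]
      rw [exists_lab]
      have := top_bits
      tauto)
  rw [Finset.sum_image (fun s _ t _ hst => lab_inj hst), FL_eq] at h
  simp only [rk_lab]
  exact h

theorem le_rk {a b : ℕ} (t : L6ab a b) : 8 * a ≤ CL.rk t := by
  obtain ⟨_, h, _, h9⟩ := (exists_lab a b (lab t)).mp ⟨t, rfl⟩
  rw [rk_lab]
  generalize lab t = c at h h9
  have h1 : c 9 ≤ c 7 := h 7 9 (by decide +kernel)
  have h2 : c 7 ≤ c 5 := h 5 7 (by decide +kernel)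
  have h3 : c 5 ≤ c 4 := h 4 5 (by decide +kernel)
  have h4 : c 5 ≤ c 3 := h 3 5 (by decide +kernel)
  have h5 : c 3 ≤ c 2 := h 2 3 (by decide +kernel)
  have h6 : c 2 ≤ c 1 := h 1 2 (by decide +kernel)
  have h7 : c 1 ≤ c 0 := h 0 1 (by decide +kernel)
  have h8 : ∑ i ∈ ({0, 1, 2, 3, 4, 5, 7, 9} : Finset (Fin 24)), c i ≤ ∑ i, c i :=
    Finset.sum_le_sum_of_subset (Finset.subset_univ _)
  refine le_trans ?_ h8
  have h10 : ∑ i ∈ ({0, 1, 2, 3, 4, 5, 7, 9} : Finset (Fin 24)), c i =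
      c 0 + (c 1 + (c 2 + (c 3 + (c 4 + (c 5 + (c 7 + c 9)))))) := by
    repeat rw [Finset.sum_insert (by decide)]
    rw [Finset.sum_singleton]
  rw [h10]
  omega

theorem low703 : low 703 := by decide +kernel

theorem pc703 : pc 703 = 8 := by decide +kernel

theorem exists_rk (a b : ℕ) : ∃ t : L6ab a b, CL.rk t = 8 * a := by
  have h := (exists_lab a b fun i => ((703 : ℕ).testBit i).toNat * a).mpr ?_
  · obtain ⟨t, ht⟩ := h
    refine ⟨t, ?_⟩
    rw [rk_lab, ht, ← Finset.sum_mul]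
    exact congrArg (· * a) pc703
  · refine ⟨fun i => ?_, fun i j hij => ?_, ?_, ?_⟩
    · cases (703 : ℕ).testBit i <;> simp
    · have := low703 i j hij
      beta_reduce
      cases h1 : (703 : ℕ).testBit j
      · simp
      · rw [this h1]
    · have : (703 : ℕ).testBit (13 : Fin 24) = false := by decide +kernel
      rw [this]; simp
    · have : (703 : ℕ).testBit (9 : Fin 24) = true := by decide +kernel
      rw [this]; simp

theorem sInf_rk (a b : ℕ) : sInf (Set.range fun s : L6ab a b => CL.rk s) = 8 * a := by
  obtain ⟨t, ht⟩ := exists_rk a b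
  apply le_antisymm
  · rw [← ht]; exact Nat.sInf_le ⟨t, rfl⟩
  · apply le_csInf (Set.range_nonempty_iff_nonempty.mpr ⟨t⟩)
    rintro _ ⟨s, rfl⟩
    exact le_rk s

theorem sum_norm (a b : ℕ) : ∑ t : L6ab a b, (Polynomial.X : Polynomial ℤ) ^
    (CL.rk t - sInf (Set.range fun s : L6ab a b => CL.rk s)) = G Polynomial.X a b := by
  have hX : (Polynomial.X : Polynomial ℤ) ^ (8 * a) ≠ 0 := pow_ne_zero _ Polynomial.X_ne_zero
  apply mul_left_cancel₀ hX
  rw [← sum_rk, sInf_rk, Finset.mul_sum]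
  refine Finset.sum_congr rfl fun t _ => ?_
  rw [← pow_add, Nat.add_sub_cancel' (le_rk t)]

end S17

/-- the normalized rank generating function identity for `L6(a,b)`. -/
theorem statement_17 (a b : ℕ) :
    (∑ t : L6ab a b, (Polynomial.X : Polynomial ℤ) ^
        (CL.rk t - sInf (Set.range fun s : L6ab a b => CL.rk s))) *
      ((NA.map qint).prod * (NB.map qint).prod * (NA.map qint).prod) =
    (NA.map fun m => qint (a + m)).prod * (NB.map fun m => qint (a + b + m)).prod *
      (NA.map fun m => qint (b + m)).prod := by
  rw [S17.sum_norm]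
  exact S17.main_poly a b

end
end

section
/- Fix nonnegative integers a and b, let ℓ := 16(a+b), and for 0 ≤ i ≤ ℓ let N_i := #{t ∈ L6(a,b) : ρ(t) − ρ₀ = i}. Then every t ∈ L6(a,b) satisfies 0 ≤ ρ(t) − ρ₀ ≤ ℓ, and: (i) L6(a,b) is rank symmetric: N_i = N_{ℓ−i} for all 0 ≤ i ≤ ℓ; (ii) L6(a,b) is rank unimodal: there exists u with N_0 ≤ N_1 ≤ … ≤ N_u ≥ N_{u+1} ≥ … ≥ N_ℓ; (iii) L6(a,b) is strongly Sperner: for every positive integer m and all antichains A_1, …, A_m of L6(a,b), the cardinality of A_1 ∪ … ∪ A_m is at most the maximum, over m-element subsets S of {0,1,…,ℓ}, of Σ_{i∈S} N_i. -/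
noncomputable section

open N6

/-- The minimum rank `ρ₀` over `L6(a,b)`. -/
def rho0 (a b : ℕ) : ℕ := sInf (Set.range fun t : L6ab a b => CL.rk t)

/-- The number of elements of `L6(a,b)` of normalized rank `i`. -/
def nrk6 (a b i : ℕ) : ℕ := Nat.card {t : L6ab a b // CL.rk t - rho0 a b = i}

namespace SLA
set_option linter.unusedSectionVars false
open Matrix

variable {α : Type} [Fintype α] [DecidableEq α]

lemma inner_mulVec (X : Matrix α α ℝ) (u v : α → ℝ) :
    (X *ᵥ u) ⬝ᵥ v = u ⬝ᵥ (Xᵀ *ᵥ v) := by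
  rw [Matrix.dotProduct_mulVec, Matrix.vecMul_transpose]

/-- X raises the grading by two. -/
lemma comm_D (X : Matrix α α ℝ) (lam : α → ℝ)
    (hX : ∀ s t, X s t ≠ 0 → lam s = lam t + 2) (v : α → ℝ) (c : ℝ)
    (hv : ∀ t, v t ≠ 0 → lam t = c) : ∀ t, (X *ᵥ v) t ≠ 0 → lam t = c + 2 := by
  intro t ht
  simp only [Matrix.mulVec, dotProduct] at ht
  obtain ⟨s, -, hs⟩ := Finset.exists_ne_zero_of_sum_ne_zero ht
  rw [hX t s (left_ne_zero_of_mul hs), hv s (right_ne_zero_of_mul hs)]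

lemma pow_raise (X : Matrix α α ℝ) (lam : α → ℝ) (e : ℝ)
    (hX : ∀ s t, X s t ≠ 0 → lam s = lam t + e) (m : ℕ) :
    ∀ s t, (X ^ m) s t ≠ 0 → lam s = lam t + e * m := by
  induction m with
  | zero =>
    intro s t h
    rw [pow_zero] at h
    have : s = t := by
      by_contra hne
      exact h (Matrix.one_apply_ne hne)
    simp [this]
  | succ m ih =>
    intro s t h
    rw [pow_succ, Matrix.mul_apply] at h
    obtain ⟨r, -, hr⟩ := Finset.exists_ne_zero_of_sum_ne_zero h
    rw [ih s r (left_ne_zero_of_mul hr), hX r t (right_ne_zero_of_mul hr)]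
    push_cast
    ring

lemma diag_eig (lam : α → ℝ) (v : α → ℝ) (c : ℝ) (hv : ∀ t, v t ≠ 0 → lam t = c) :
    Matrix.diagonal lam *ᵥ v = c • v := by
  funext t
  rw [Matrix.mulVec_diagonal]
  by_cases h : v t = 0
  · simp [h]
  · simp [hv t h]

lemma pow_supp (X : Matrix α α ℝ) (lam : α → ℝ) (e : ℝ)
    (hX : ∀ s t, X s t ≠ 0 → lam s = lam t + e) (m : ℕ) (v : α → ℝ) (c : ℝ)
    (hv : ∀ t, v t ≠ 0 → lam t = c) : ∀ t, ((X ^ m) *ᵥ v) t ≠ 0 → lam t = c + e * m := by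
  intro t ht
  simp only [Matrix.mulVec, dotProduct] at ht
  obtain ⟨s, -, hs⟩ := Finset.exists_ne_zero_of_sum_ne_zero ht
  rw [pow_raise X lam e hX m t s (left_ne_zero_of_mul hs), hv s (right_ne_zero_of_mul hs)]

/-- Highest weight vector computation. -/
lemma highest (X : Matrix α α ℝ) (lam : α → ℝ)
    (hX : ∀ s t, X s t ≠ 0 → lam s = lam t + 2)
    (hc : X * Xᵀ - Xᵀ * X = Matrix.diagonal lam) (w : α → ℝ) (mu : ℝ)
    (hw : ∀ t, w t ≠ 0 → lam t = mu) (hXw : X *ᵥ w = 0) (n : ℕ) :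
    X *ᵥ ((Xᵀ ^ (n + 1)) *ᵥ w) = ((n + 1 : ℝ) * (mu - n)) • ((Xᵀ ^ n) *ᵥ w) := by
  have hY : ∀ s t, Xᵀ s t ≠ 0 → lam s = lam t + (-2) := by
    intro s t h
    have := hX t s h
    linarith
  have hXY : X * Xᵀ = Xᵀ * X + Matrix.diagonal lam := by rw [← hc]; abel
  have key : ∀ n : ℕ, X *ᵥ ((Xᵀ ^ (n + 1)) *ᵥ w) =
      Xᵀ *ᵥ (X *ᵥ ((Xᵀ ^ n) *ᵥ w)) + (mu - 2 * n) • ((Xᵀ ^ n) *ᵥ w) := by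
    intro n
    have h1 := diag_eig lam _ _ (pow_supp Xᵀ lam (-2) hY n w mu hw)
    have : (mu - 2 * n) = mu + -2 * n := by ring
    rw [this, ← h1, pow_succ', Matrix.mulVec_mulVec, Matrix.mulVec_mulVec, Matrix.mulVec_mulVec,
      Matrix.mulVec_mulVec, ← Matrix.add_mulVec]
    rw [← mul_assoc, hXY, add_mul, mul_assoc]
  induction n with
  | zero => rw [key]; simp [hXw]
  | succ n ih =>
    rw [key, ih, Matrix.mulVec_smul, Matrix.mulVec_mulVec, ← pow_succ', ← add_smul]
    congr 1
    push_cast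
    ring

lemma level_inj (X : Matrix α α ℝ) (lam : α → ℝ)
    (hX : ∀ s t, X s t ≠ 0 → lam s = lam t + 2)
    (hc : X * Xᵀ - Xᵀ * X = Matrix.diagonal lam) (m : ℕ) : ∀ (v : α → ℝ) (c : ℝ)
    (_ : ∀ t, v t ≠ 0 → lam t = c) (_ : c ≤ -m) (_ : (X ^ m) *ᵥ v = 0), v = 0 := by
  induction m with
  | zero => intro v c _ _ h; simpa using h
  | succ m ih =>
    intro v c hv hcm h
    push_cast at hcm
    refine ih v c hv (by linarith) ?_
    set w := (X ^ m) *ᵥ v with hwdef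
    have hXw : X *ᵥ w = 0 := by
      rw [hwdef, Matrix.mulVec_mulVec, ← pow_succ', h]
    have hw := pow_supp X lam 2 hX m v c hv
    have hH := highest X lam hX hc w _ hw hXw
    have hY0 : (Xᵀ ^ m) *ᵥ w = 0 ∨ m = 0 := by
      rcases m with _ | m
      · exact Or.inr rfl
      left
      have h1 := hH m
      have h2 : ((Xᵀ ^ (m + 1)) *ᵥ w) ⬝ᵥ ((Xᵀ ^ (m + 1)) *ᵥ w)
          = ((m + 1 : ℝ) * (c + 2 * (m + 1 : ℕ) - m)) *
            (((Xᵀ ^ m) *ᵥ w) ⬝ᵥ ((Xᵀ ^ m) *ᵥ w)) := by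
        have h3 := congrArg (fun u => ((Xᵀ ^ m) *ᵥ w) ⬝ᵥ u) h1
        simp only [dotProduct_smul, smul_eq_mul] at h3
        rw [← h3]
        have h8 : (Xᵀ ^ (m + 1)) *ᵥ w = Xᵀ *ᵥ ((Xᵀ ^ m) *ᵥ w) := by
          rw [pow_succ', ← Matrix.mulVec_mulVec]
        have h9 := inner_mulVec Xᵀ ((Xᵀ ^ m) *ᵥ w) ((Xᵀ ^ (m + 1)) *ᵥ w)
        rwa [← h8, Matrix.transpose_transpose] at h9
      have h4 : 0 ≤ ((Xᵀ ^ m) *ᵥ w) ⬝ᵥ ((Xᵀ ^ m) *ᵥ w) :=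
        Finset.sum_nonneg fun i _ => mul_self_nonneg _
      have h5 : 0 ≤ ((Xᵀ ^ (m + 1)) *ᵥ w) ⬝ᵥ ((Xᵀ ^ (m + 1)) *ᵥ w) :=
        Finset.sum_nonneg fun i _ => mul_self_nonneg _
      have h6 : ((m + 1 : ℝ) * (c + 2 * (m + 1 : ℕ) - m)) ≤ 0 := by
        apply mul_nonpos_of_nonneg_of_nonpos
        · positivity
        · push_cast at hcm ⊢; linarith
      have h7 : ((Xᵀ ^ (m + 1)) *ᵥ w) ⬝ᵥ ((Xᵀ ^ (m + 1)) *ᵥ w) = 0 := by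
        apply le_antisymm _ h5
        rw [h2]
        exact mul_nonpos_of_nonpos_of_nonneg h6 h4
      exact dotProduct_self_eq_zero.mp h7
    rcases hY0 with h0 | h0
    · have : w ⬝ᵥ w = 0 := by
        conv_lhs => rw [hwdef, inner_mulVec, Matrix.transpose_pow, h0]
        simp
      exact dotProduct_self_eq_zero.mp this
    · subst h0
      have h1 := hH 0
      have h3 := congrArg (fun u => w ⬝ᵥ u) h1
      simp only [dotProduct_smul, smul_eq_mul, pow_zero, Matrix.one_mulVec, zero_add, pow_one] at h3
      rw [← Matrix.transpose_transpose X, ← inner_mulVec] at h3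
      simp only [Matrix.transpose_transpose] at h3
      have h4 : 0 ≤ (Xᵀ *ᵥ w) ⬝ᵥ (Xᵀ *ᵥ w) := Finset.sum_nonneg fun i _ => mul_self_nonneg _
      have h5 : 0 ≤ w ⬝ᵥ w := Finset.sum_nonneg fun i _ => mul_self_nonneg _
      rw [h3] at h4
      have h6 : w ⬝ᵥ w = 0 := by
        push_cast at h4 hcm
        nlinarith
      exact dotProduct_self_eq_zero.mp h6

lemma multi_inj (X : Matrix α α ℝ) (lam : α → ℝ)
    (hX : ∀ s t, X s t ≠ 0 → lam s = lam t + 2)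
    (hc : X * Xᵀ - Xᵀ * X = Matrix.diagonal lam) (m : ℕ) (v : α → ℝ)
    (hv : ∀ t, v t ≠ 0 → lam t ≤ -m) (h : (X ^ m) *ᵥ v = 0) : v = 0 := by
  classical
  funext t
  by_contra ht
  have hz : (fun s => if lam s = lam t then v s else 0) = 0 := by
    refine level_inj X lam hX hc m _ (lam t) ?_ (hv t ht) ?_
    · intro s hs
      by_contra hne
      simp [hne] at hs
    · funext s
      simp only [Matrix.mulVec, dotProduct, Pi.zero_apply]
      by_cases hs : lam s = lam t + 2 * m
      · have := congrFun h s
        simp only [Matrix.mulVec, dotProduct, Pi.zero_apply] at this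
        rw [← this]
        refine Finset.sum_congr rfl fun r _ => ?_
        by_cases hr : (X ^ m) s r = 0
        · simp [hr]
        · have := pow_raise X lam 2 hX m s r hr
          rw [if_pos (by linarith)]
      · refine Finset.sum_eq_zero fun r _ => ?_
        by_cases hr : (X ^ m) s r = 0
        · simp [hr]
        · have := pow_raise X lam 2 hX m s r hr
          rw [if_neg (fun h' => hs (by linarith)), mul_zero]
  have := congrFun hz t
  simp at this
  exact ht this

/-- Extension by zero. -/
def extz (p : α → Prop) [DecidablePred p] : ({t // p t} → ℝ) →ₗ[ℝ] (α → ℝ) where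
  toFun f t := if h : p t then f ⟨t, h⟩ else 0
  map_add' f g := by funext t; by_cases h : p t <;> simp [h]
  map_smul' c f := by funext t; by_cases h : p t <;> simp [h]

lemma extz_supp (p : α → Prop) [DecidablePred p] (f : {t // p t} → ℝ) (t : α)
    (h : extz p f t ≠ 0) : p t := by
  by_contra hne
  exact h (by simp [extz, hne])

lemma extz_inj (p : α → Prop) [DecidablePred p] (f : {t // p t} → ℝ)
    (h : extz p f = 0) : f = 0 := by
  funext t
  have := congrFun h t.1
  simpa [extz, t.2] using this

lemma card_level_le (X : Matrix α α ℝ) (lam : α → ℝ)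
    (hX : ∀ s t, X s t ≠ 0 → lam s = lam t + 2)
    (hc : X * Xᵀ - Xᵀ * X = Matrix.diagonal lam) (m : ℕ) (c d : ℝ) (hcm : c ≤ -m)
    (hd : d = c + 2 * m) :
    Nat.card {t // lam t = c} ≤ Nat.card {t // lam t = d} := by
  classical
  let f : ({t // lam t = c} → ℝ) →ₗ[ℝ] ({t // lam t = d} → ℝ) :=
    (LinearMap.funLeft ℝ ℝ (fun t : {t // lam t = d} => t.1)) ∘ₗ
      (Matrix.mulVecLin (X ^ m)) ∘ₗ (extz (fun t => lam t = c))
  have hf : Function.Injective f := by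
    rw [← LinearMap.ker_eq_bot, LinearMap.ker_eq_bot']
    intro g hg
    apply extz_inj
    apply level_inj X lam hX hc m _ c (extz_supp _ g) hcm
    funext s
    by_contra hs
    have hs' := pow_supp X lam 2 hX m _ c (extz_supp _ g) s hs
    exact hs (congrFun hg ⟨s, by rw [hs', hd]⟩)
  have := LinearMap.finrank_le_finrank_of_injective hf
  rw [Module.finrank_fintype_fun_eq_card, Module.finrank_fintype_fun_eq_card] at this
  rwa [Nat.card_eq_fintype_card, Nat.card_eq_fintype_card]

lemma neg_comm (X : Matrix α α ℝ) (lam : α → ℝ)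
    (hc : X * Xᵀ - Xᵀ * X = Matrix.diagonal lam) :
    Xᵀ * Xᵀᵀ - Xᵀᵀ * Xᵀ = Matrix.diagonal (-lam) := by
  have h : Matrix.diagonal (-lam) = -Matrix.diagonal lam := (Matrix.diagonal_neg lam).symm
  rw [Matrix.transpose_transpose, h, ← hc]
  abel

lemma neg_raise (X : Matrix α α ℝ) (lam : α → ℝ)
    (hX : ∀ s t, X s t ≠ 0 → lam s = lam t + 2) :
    ∀ s t, Xᵀ s t ≠ 0 → (-lam) s = (-lam) t + 2 := by
  intro s t h
  have := hX t s h
  simp only [Pi.neg_apply]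
  linarith

/-- Lower bound for the rank of `X ^ m`. -/
lemma rank_lower (X : Matrix α α ℝ) (lam : α → ℝ)
    (hX : ∀ s t, X s t ≠ 0 → lam s = lam t + 2)
    (hc : X * Xᵀ - Xᵀ * X = Matrix.diagonal lam) (m : ℕ) :
    Nat.card {t // lam t ≤ -m ∨ m < lam t} ≤
      Module.finrank ℝ (LinearMap.range (Matrix.mulVecLin (X ^ m))) := by
  classical
  let pl : (α → ℝ) →ₗ[ℝ] (α → ℝ) := Matrix.mulVecLin
    (Matrix.diagonal fun t => if lam t ≤ -m then (1 : ℝ) else 0)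
  let ph : (α → ℝ) →ₗ[ℝ] (α → ℝ) := Matrix.mulVecLin
    (Matrix.diagonal fun t => if m < lam t then (1 : ℝ) else 0)
  have hpl : ∀ v t, pl v t = if lam t ≤ -m then v t else 0 := by
    intro v t
    simp [pl, Matrix.mulVec_diagonal]
  have hph : ∀ v t, ph v t = if m < lam t then v t else 0 := by
    intro v t
    simp [ph, Matrix.mulVec_diagonal]
  let f : ({t // lam t ≤ -m ∨ m < lam t} → ℝ) →ₗ[ℝ]
      (LinearMap.range (Matrix.mulVecLin (X ^ m))) :=
    (LinearMap.rangeRestrict (Matrix.mulVecLin (X ^ m))) ∘ₗ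
      ((pl + (Matrix.mulVecLin (Xᵀ ^ m)) ∘ₗ ph) ∘ₗ (extz (fun t => lam t ≤ -m ∨ m < lam t)))
  have hf : Function.Injective f := by
    rw [← LinearMap.ker_eq_bot, LinearMap.ker_eq_bot']
    intro g hg
    apply extz_inj
    set v := extz (fun t => lam t ≤ -m ∨ m < lam t) g with hv
    have h1 : (X ^ m) *ᵥ (pl v + (Xᵀ ^ m) *ᵥ (ph v)) = 0 := by
      have := congrArg Subtype.val hg
      simpa [f] using this
    rw [Matrix.mulVec_add] at h1
    have h2 : (ph v) ⬝ᵥ ((X ^ m) *ᵥ (pl v)) = 0 := by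
      refine Finset.sum_eq_zero fun s _ => ?_
      rw [hph]
      split_ifs with hs
      · have : ((X ^ m) *ᵥ (pl v)) s = 0 := by
          simp only [Matrix.mulVec, dotProduct]
          refine Finset.sum_eq_zero fun r _ => ?_
          rw [hpl]
          split_ifs with hr
          · by_cases hx : (X ^ m) s r = 0
            · simp [hx]
            · have := pow_raise X lam 2 hX m s r hx
              linarith
          · simp
        rw [this, mul_zero]
      · simp
    have h3 : ((Xᵀ ^ m) *ᵥ (ph v)) ⬝ᵥ ((Xᵀ ^ m) *ᵥ (ph v)) = 0 := by
      have h4 := congrArg (fun u => (ph v) ⬝ᵥ u) h1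
      simp only [dotProduct_add, h2, zero_add, dotProduct_zero] at h4
      rw [inner_mulVec, Matrix.transpose_pow, Matrix.transpose_transpose]
      exact h4
    have h5 : (Xᵀ ^ m) *ᵥ (ph v) = 0 := dotProduct_self_eq_zero.mp h3
    have h6 : ph v = 0 := by
      refine multi_inj Xᵀ (-lam) (neg_raise X lam hX) (neg_comm X lam hc) m _ ?_ h5
      intro t ht
      rw [hph] at ht
      split_ifs at ht with h
      · simp only [Pi.neg_apply]; linarith
      · exact absurd rfl ht
    rw [h5, Matrix.mulVec_zero, add_zero] at h1
    have h7 : pl v = 0 := by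
      refine multi_inj X lam hX hc m _ ?_ h1
      intro t ht
      rw [hpl] at ht
      split_ifs at ht with h
      · exact h
      · exact absurd rfl ht
    funext t
    by_contra ht
    rcases extz_supp _ g t ht with h | h
    · have := congrFun h7 t
      rw [hpl, if_pos h] at this
      exact ht this
    · have := congrFun h6 t
      rw [hph, if_pos h] at this
      exact ht this
  have := LinearMap.finrank_le_finrank_of_injective hf
  rw [Module.finrank_fintype_fun_eq_card] at this
  rwa [Nat.card_eq_fintype_card]

/-- Coordinate subspace. -/
def cs (I : Finset α) : Submodule ℝ (α → ℝ) :=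
  Submodule.span ℝ ((I.image fun t => (Pi.single t 1 : α → ℝ)) : Finset (α → ℝ))

lemma cs_finrank (I : Finset α) : Module.finrank ℝ (cs I) ≤ I.card :=
  (finrank_span_finset_le_card _).trans Finset.card_image_le

lemma mem_cs (I : Finset α) (v : α → ℝ) (hv : ∀ t, v t ≠ 0 → t ∈ I) : v ∈ cs I := by
  have : v = ∑ t, v t • (Pi.single t 1 : α → ℝ) := by
    funext s
    simp [Finset.sum_apply, Pi.single_apply]
  rw [this]
  refine Submodule.sum_mem _ fun t _ => ?_
  by_cases h : v t = 0
  · simp [h]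
  · exact Submodule.smul_mem _ _ (Submodule.subset_span (by
      simp only [Finset.coe_image, Set.mem_image]
      exact ⟨t, hv t h, rfl⟩))

lemma cs_le (I : Finset α) (W : Submodule ℝ (α → ℝ))
    (h : ∀ t ∈ I, (Pi.single t 1 : α → ℝ) ∈ W) : cs I ≤ W := by
  apply Submodule.span_le.mpr
  intro x hx
  simp only [Finset.coe_image, Set.mem_image] at hx
  obtain ⟨t, ht, rfl⟩ := hx
  exact h t ht

lemma fam_rank (le : α → α → Prop) (hrefl : ∀ x, le x x) (htr : ∀ x y z, le x y → le y z → le x z)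
    (hanti : ∀ x y, le x y → le y x → x = y)
    (X : Matrix α α ℝ) (hX : ∀ s t, X s t ≠ 0 → le t s ∧ t ≠ s) (m : ℕ) :
    ∀ (I F : Finset α) (h : α → ℕ) (_ : ∀ f ∈ F, ∀ x, le f x → x ∈ I)
      (_ : ∀ f ∈ F, ∀ g ∈ F, le f g → f ≠ g → h f < h g) (_ : ∀ f ∈ F, h f < m),
      F.card + Module.finrank ℝ ((cs I).map (Matrix.mulVecLin (X ^ m))) ≤ I.card := by
  classical
  induction m with
  | zero =>
    intro I F h _ _ h3
    have : F = ∅ := Finset.eq_empty_of_forall_notMem fun f hf => by simpa using h3 f hf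
    rw [this, Finset.card_empty, zero_add]
    exact (Submodule.finrank_map_le _ _).trans (cs_finrank I)
  | succ m ih =>
    intro I F h h1 h2 h3
    set I1 := Finset.univ.filter fun x => ∃ f ∈ F, le f x with hI1
    set I2 := Finset.univ.filter fun x => ∃ f ∈ F, le f x ∧ f ≠ x with hI2
    set F2 := F ∩ I2 with hF2
    have hI2I1 : I2 ⊆ I1 := by
      intro x hx
      simp only [hI1, hI2, Finset.mem_filter, Finset.mem_univ, true_and] at hx ⊢
      obtain ⟨f, hf, hfx, _⟩ := hx
      exact ⟨f, hf, hfx⟩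
    have hI1I : I1 ⊆ I := by
      intro x hx
      simp only [hI1, Finset.mem_filter, Finset.mem_univ, true_and] at hx
      obtain ⟨f, hf, hfx⟩ := hx
      exact h1 f hf x hfx
    have hih := ih I2 F2 (fun x => h x - 1) ?_ ?_ ?_
    rotate_left
    · intro f hf x hfx
      simp only [hF2, hI2, Finset.mem_inter, Finset.mem_filter, Finset.mem_univ, true_and] at hf ⊢
      obtain ⟨hf, g, hg, hgf, hne⟩ := hf
      refine ⟨g, hg, htr _ _ _ hgf hfx, ?_⟩
      rintro rfl
      exact hne (hanti _ _ hgf hfx)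
    · intro f hf g hg hfg hne
      have hg' := hg
      simp only [hF2, hI2, Finset.mem_inter, Finset.mem_filter, Finset.mem_univ, true_and] at hf hg'
      obtain ⟨hf, f0, hf0, hf0f, hne0⟩ := hf
      have a1 := h2 f hf g hg'.1 hfg hne
      have a2 := h2 f0 hf0 f hf hf0f hne0
      show h f - 1 < h g - 1
      omega
    · intro f hf
      simp only [hF2, hI2, Finset.mem_inter, Finset.mem_filter, Finset.mem_univ, true_and] at hf
      obtain ⟨hf, f0, hf0, hf0f, hne0⟩ := hf
      have a2 := h2 f0 hf0 f hf hf0f hne0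
      have a3 := h3 f hf
      show h f - 1 < m
      omega
    have hc1 : (F \ F2).card + I2.card ≤ I1.card := by
      have : (F \ F2) ∪ I2 ⊆ I1 := by
        apply Finset.union_subset _ hI2I1
        intro x hx
        simp only [hI1, Finset.mem_filter, Finset.mem_univ, true_and]
        exact ⟨x, (Finset.mem_sdiff.mp hx).1, hrefl x⟩
      rw [← Finset.card_union_of_disjoint]
      · exact Finset.card_le_card this
      · rw [Finset.disjoint_left]
        intro x hx hx2
        rw [Finset.mem_sdiff] at hx
        exact hx.2 (Finset.mem_inter.mpr ⟨hx.1, hx2⟩)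
    have hc2 : (F \ F2).card + F2.card = F.card :=
      Finset.card_sdiff_add_card_eq_card Finset.inter_subset_left
    have hc3 : (I \ I1).card + I1.card = I.card := Finset.card_sdiff_add_card_eq_card hI1I
    have hmap : (cs I).map (Matrix.mulVecLin (X ^ (m + 1))) ≤
        (cs (I \ I1)).map (Matrix.mulVecLin (X ^ (m + 1))) ⊔
          (cs I2).map (Matrix.mulVecLin (X ^ m)) := by
      rw [Submodule.map_le_iff_le_comap]
      apply cs_le
      intro t ht
      rw [Submodule.mem_comap]
      by_cases ht1 : t ∈ I1
      · apply Submodule.mem_sup_right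
        refine ⟨X *ᵥ (Pi.single t 1), ?_, ?_⟩
        · apply mem_cs
          intro s hs
          rw [Matrix.mulVec_single_one] at hs
          obtain ⟨hts, hne⟩ := hX s t hs
          simp only [hI1, hI2, Finset.mem_filter, Finset.mem_univ, true_and] at ht1 ⊢
          obtain ⟨f, hf, hft⟩ := ht1
          refine ⟨f, hf, htr _ _ _ hft hts, ?_⟩
          rintro rfl
          exact hne (hanti _ _ hts hft)
        · simp only [Matrix.mulVecLin_apply, Matrix.mulVec_mulVec, ← pow_succ]
      · apply Submodule.mem_sup_left
        refine Submodule.mem_map_of_mem (mem_cs _ _ ?_)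
        intro s hs
        have : s = t := by
          by_contra hne
          exact hs (Pi.single_eq_of_ne hne _)
        subst this
        exact Finset.mem_sdiff.mpr ⟨ht, ht1⟩
    have hfr := (Submodule.finrank_mono hmap).trans
      (Submodule.finrank_add_le_finrank_add_finrank _ _)
    have hfr2 := (Submodule.finrank_map_le (Matrix.mulVecLin (X ^ (m + 1))) (cs (I \ I1))).trans
      (cs_finrank _)
    omega

/-- A family covered by `m` antichains carries a strictly monotone height below `m`. -/
lemma height_fn (le : α → α → Prop) (hrefl : ∀ x, le x x)
    (htr : ∀ x y z, le x y → le y z → le x z)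
    (hanti : ∀ x y, le x y → le y x → x = y) (m : ℕ) (A : Fin m → Set α)
    (hA : ∀ j, ∀ s ∈ A j, ∀ t ∈ A j, s ≠ t → ¬ le s t ∧ ¬ le t s) :
    ∃ h : α → ℕ, (∀ f ∈ ⋃ j, A j, ∀ g ∈ ⋃ j, A j, le f g → f ≠ g → h f < h g) ∧
      ∀ f ∈ ⋃ j, A j, h f < m := by
  classical
  let _ : PartialOrder α :=
    { le := le, le_refl := hrefl, le_trans := htr, le_antisymm := hanti }
  let F := {x : α // x ∈ ⋃ j, A j}
  have hch : ∀ f : F, ∃ j, f.1 ∈ A j := fun f => Set.mem_iUnion.mp f.2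
  choose jj hjj using hch
  have hlen : ∀ p : LTSeries F, p.length < m := by
    intro p
    have hinj : Function.Injective fun i => jj (p i) := by
      intro i i' hii
      by_contra hne
      have hpne : p i ≠ p i' := fun h => hne (p.strictMono.injective h)
      have hpne' : (p i).1 ≠ (p i').1 := fun h => hpne (Subtype.ext h)
      have h0 := hjj (p i')
      rw [← show jj (p i) = jj (p i') from hii] at h0
      have h1 := hA (jj (p i)) _ (hjj (p i)) _ h0 hpne'
      rcases lt_or_gt_of_ne hne with hlt | hlt
      · exact h1.1 (le_of_lt (p.strictMono hlt) : p i ≤ p i')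
      · exact h1.2 (le_of_lt (p.strictMono hlt) : p i' ≤ p i)
    have := Fintype.card_le_of_injective _ hinj
    simp only [Fintype.card_fin] at this
    omega
  have hfin : ∀ f : F, Order.height f ≤ ((m - 1 : ℕ) : ℕ∞) := by
    intro f
    apply Order.height_le
    intro p _
    have := hlen p
    exact_mod_cast (by omega : p.length ≤ m - 1)
  have hm : ∀ _ : F, 0 < m := fun f => (jj f).pos
  refine ⟨fun x => if h : x ∈ ⋃ j, A j then (Order.height (⟨x, h⟩ : F)).toNat else 0, ?_, ?_⟩
  · intro f hf g hg hfg hne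
    simp only [hf, hg, dif_pos]
    have hlt : (⟨f, hf⟩ : F) < ⟨g, hg⟩ :=
      lt_of_le_of_ne hfg (fun h => hne (congrArg Subtype.val h))
    have h1 : Order.height (⟨f, hf⟩ : F) < ⊤ := (hfin _).trans_lt (ENat.natCast_lt_top _)
    have h2 : Order.height (⟨g, hg⟩ : F) < ⊤ := (hfin _).trans_lt (ENat.natCast_lt_top _)
    have h3 := Order.height_strictMono hlt h1
    rw [← ENat.natCast_toNat h1.ne, ← ENat.natCast_toNat h2.ne] at h3
    exact_mod_cast h3
  · intro f hf
    simp only [hf, dif_pos]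
    have h1 := ENat.toNat_le_of_le_natCast (hfin ⟨f, hf⟩)
    have h2 := hm ⟨f, hf⟩
    omega

/-- The abstract Peck theorem. -/
theorem peck (le : α → α → Prop) (hrefl : ∀ x, le x x)
    (htr : ∀ x y z, le x y → le y z → le x z)
    (hanti : ∀ x y, le x y → le y x → x = y) (r : α → ℕ) (l : ℕ) (hr : ∀ t, r t ≤ l)
    (X : Matrix α α ℝ) (hX : ∀ s t, X s t ≠ 0 → le t s ∧ r s = r t + 1)
    (hc : X * Xᵀ - Xᵀ * X = Matrix.diagonal fun t => 2 * (r t : ℝ) - l) :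
    (∀ i j, i ≤ j → i + j ≤ l → Nat.card {t // r t = i} ≤ Nat.card {t // r t = j}) ∧
    (∀ i j, i ≤ j → l ≤ i + j → Nat.card {t // r t = j} ≤ Nat.card {t // r t = i}) ∧
    (∀ m : ℕ, 0 < m → ∀ A : Fin m → Set α,
      (∀ j, ∀ s ∈ A j, ∀ t ∈ A j, s ≠ t → ¬ le s t ∧ ¬ le t s) →
      ∃ S : Finset ℕ, S ⊆ Finset.range (l + 1) ∧ S.card ≤ m ∧
        Nat.card (⋃ j, A j) ≤ ∑ i ∈ S, Nat.card {t // r t = i}) := by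
  classical
  set lam : α → ℝ := fun t => 2 * (r t : ℝ) - l with hlam
  have hXl : ∀ s t, X s t ≠ 0 → lam s = lam t + 2 := by
    intro s t h
    have := (hX s t h).2
    simp only [hlam, this]
    push_cast
    ring
  have hlev : ∀ i : ℕ, Nat.card {t // r t = i} = Nat.card {t // lam t = 2 * (i : ℝ) - l} := by
    intro i
    refine Nat.card_congr (Equiv.subtypeEquivRight fun t => ?_)
    simp only [hlam]
    constructor
    · intro h; rw [h]
    · intro h
      have : (r t : ℝ) = i := by linarith
      exact_mod_cast this
  have hlev' : ∀ i : ℕ, Nat.card {t // r t = i} = Nat.card {t // (-lam) t = l - 2 * (i : ℝ)} := by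
    intro i
    rw [hlev]
    refine Nat.card_congr (Equiv.subtypeEquivRight fun t => ?_)
    simp only [Pi.neg_apply]
    constructor <;> intro h <;> linarith
  refine ⟨?_, ?_, ?_⟩
  · intro i j hij hl
    rw [hlev, hlev]
    obtain ⟨m, rfl⟩ := Nat.exists_eq_add_of_le hij
    have hl' : (i : ℝ) + (i + m : ℕ) ≤ l := by exact_mod_cast hl
    push_cast at hl'
    apply card_level_le X lam hXl hc m
    · linarith
    · push_cast; ring
  · intro i j hij hl
    rw [hlev', hlev']
    obtain ⟨m, rfl⟩ := Nat.exists_eq_add_of_le hij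
    have hl' : (l : ℝ) ≤ (i : ℝ) + (i + m : ℕ) := by exact_mod_cast hl
    push_cast at hl'
    apply card_level_le Xᵀ (-lam) (neg_raise X lam hXl) (neg_comm X lam hc) m
    · push_cast; linarith
    · push_cast; ring
  · intro m hm A hA
    obtain ⟨h, hh1, hh2⟩ := height_fn le hrefl htr hanti m A hA
    have h1 := fam_rank le hrefl htr hanti X (fun s t hst => ⟨(hX s t hst).1, by
      rintro rfl
      have := (hX _ _ hst).2
      omega⟩) m Finset.univ (Finset.univ.filter fun x => x ∈ ⋃ j, A j) h
      (fun _ _ _ _ => Finset.mem_univ _)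
      (fun f hf g hg => hh1 f (Finset.mem_filter.mp hf).2 g (Finset.mem_filter.mp hg).2)
      (fun f hf => hh2 f (Finset.mem_filter.mp hf).2)
    have htop : cs (Finset.univ : Finset α) = ⊤ := by
      rw [eq_top_iff]
      intro v _
      exact mem_cs _ _ fun _ _ => Finset.mem_univ _
    rw [htop, Submodule.map_top] at h1
    have h2 := rank_lower X lam hXl hc m
    refine ⟨(Finset.range (l + 1)).filter fun i => l < 2 * i + m ∧ 2 * i ≤ l + m,
      Finset.filter_subset _ _, ?_, ?_⟩
    · have : ((Finset.range (l + 1)).filter fun i => l < 2 * i + m ∧ 2 * i ≤ l + m) ⊆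
          Finset.Ico ((l + m) / 2 + 1 - m) ((l + m) / 2 + 1) := by
        intro i hi
        simp only [Finset.mem_filter, Finset.mem_range, Finset.mem_Ico] at hi ⊢
        omega
      refine (Finset.card_le_card this).trans ?_
      rw [Nat.card_Ico]
      omega
    · have h3 : Nat.card (⋃ j, A j) = (Finset.univ.filter fun x => x ∈ ⋃ j, A j).card := by
        rw [Nat.card_eq_fintype_card, Fintype.card_subtype]
      have h4 : ∑ i ∈ (Finset.range (l + 1)).filter (fun i => l < 2 * i + m ∧ 2 * i ≤ l + m),
          Nat.card {t // r t = i} =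
          (Finset.univ.filter fun t => l < 2 * r t + m ∧ 2 * r t ≤ l + m).card := by
        rw [Finset.card_eq_sum_card_fiberwise (f := r)
          (t := (Finset.range (l + 1)).filter (fun i => l < 2 * i + m ∧ 2 * i ≤ l + m))]
        · refine Finset.sum_congr rfl fun i hi => ?_
          rw [Nat.card_eq_fintype_card, Fintype.card_subtype]
          congr 1
          ext t
          simp only [Finset.mem_filter, Finset.mem_range, Finset.mem_univ, true_and] at hi ⊢
          constructor
          · intro h; subst h; exact ⟨hi.2, rfl⟩
          · intro h; exact h.2
        · intro t ht
          simp only [Finset.coe_filter, Set.mem_ofPred_eq, Finset.mem_univ, true_and,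
            Finset.mem_range] at ht ⊢
          exact ⟨Nat.lt_succ_of_le (hr t), ht⟩
      have h5 : Nat.card {t // lam t ≤ -m ∨ m < lam t} =
          (Finset.univ.filter fun t => ¬ (l < 2 * r t + m ∧ 2 * r t ≤ l + m)).card := by
        rw [Nat.card_eq_fintype_card, Fintype.card_subtype]
        congr 1
        ext t
        simp only [Finset.mem_filter, Finset.mem_univ, true_and, hlam]
        have e1 : (2 * (r t : ℝ) - l ≤ -m) ↔ 2 * r t + m ≤ l := by
          rw [← @Nat.cast_le ℝ]
          push_cast
          constructor <;> intro h <;> linarith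
        have e2 : ((m : ℝ) < 2 * (r t : ℝ) - l) ↔ l + m < 2 * r t := by
          rw [← @Nat.cast_lt ℝ]
          push_cast
          constructor <;> intro h <;> linarith
        rw [e1, e2]
        omega
      have h6 := Finset.card_filter_add_card_filter_not (s := (Finset.univ : Finset α))
        (fun t => l < 2 * r t + m ∧ 2 * r t ≤ l + m)
      rw [h3, h4]
      omega

end SLA

namespace E6C
open Finset

section Residue
variable {ι κ : Type} [DecidableEq ι] [DecidableEq κ]

open Polynomial in
lemma lagr_inj (s : Finset ι) (v : ι → ℝ) (k : Finset κ) (w : κ → ℝ) (hcard : s.card = k.card)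
    (hv : Set.InjOn v s) :
    ∑ g ∈ s, (∏ q ∈ k, (v g - w q)) / (∏ g' ∈ s.erase g, (v g - v g')) =
      ∑ g ∈ s, v g - ∑ q ∈ k, w q := by
  rcases Nat.eq_zero_or_pos s.card with h0 | hpos
  · have hs : s = ∅ := Finset.card_eq_zero.mp h0
    have hk : k = ∅ := Finset.card_eq_zero.mp (hcard ▸ h0)
    simp [hs, hk]
  set Q : ℝ[X] := ∏ q ∈ k, (X - C (w q)) with hQ
  set R : ℝ[X] := ∏ g ∈ s, (X - C (v g)) with hR
  have hQm : Q.Monic := monic_prod_X_sub_C w k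
  have hRm : R.Monic := monic_prod_X_sub_C v s
  have hQd : Q.natDegree = k.card := natDegree_finsetProd_X_sub_C_eq_card k w
  have hRd : R.natDegree = s.card := natDegree_finsetProd_X_sub_C_eq_card s v
  have hdeg : (Q - R).degree < s.card := by
    have h1 : Q.degree = R.degree := by
      rw [degree_eq_natDegree hQm.ne_zero, degree_eq_natDegree hRm.ne_zero, hQd, hRd, hcard]
    have h2 := degree_sub_lt_left h1 hQm.ne_zero (by rw [hQm.leadingCoeff, hRm.leadingCoeff])
    rwa [degree_eq_natDegree hQm.ne_zero, hQd, ← hcard] at h2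
  have h := Lagrange.coeff_eq_sum hv hdeg
  have hc1 : Q.coeff (s.card - 1) = -∑ q ∈ k, w q := by
    rw [hcard]; exact prod_X_sub_C_coeff_card_pred k w (hcard ▸ hpos)
  have hc2 : R.coeff (s.card - 1) = -∑ g ∈ s, v g := prod_X_sub_C_coeff_card_pred s v hpos
  rw [coeff_sub, hc1, hc2] at h
  have : ∑ g ∈ s, v g - ∑ q ∈ k, w q = -∑ q ∈ k, w q - -∑ g ∈ s, v g := by ring
  rw [this, h]
  refine Finset.sum_congr rfl fun g hg => ?_
  have hRg : R.eval (v g) = 0 := by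
    rw [hR, eval_prod]
    exact Finset.prod_eq_zero hg (by simp)
  rw [eval_sub, hRg, sub_zero, hQ, eval_prod]
  simp

/-- Residue identity with possible collisions of the nodes, cancelled by zeros. -/
lemma lagr (n : ℕ) : ∀ (s : Finset ι) (v : ι → ℝ) (k : Finset κ) (w : κ → ℝ) (_ : s.card = n)
    (_ : s.card = k.card)
    (_ : ∀ x, 2 ≤ (s.filter fun g => v g = x).card →
      (s.filter fun g => v g = x).card ≤ (k.filter fun q => w q = x).card),
    ∑ g ∈ s, (∏ q ∈ k, (v g - w q)) / (∏ g' ∈ s.erase g, (v g - v g')) =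
      ∑ g ∈ s, v g - ∑ q ∈ k, w q := by
  induction n with
  | zero =>
    intro s v k w h0 hcard _
    have hs : s = ∅ := Finset.card_eq_zero.mp h0
    have hk : k = ∅ := Finset.card_eq_zero.mp (hcard ▸ h0)
    simp [hs, hk]
  | succ n ih =>
    intro s v k w hn hcard hyp
    by_cases hinj : Set.InjOn v s
    · exact lagr_inj s v k w hcard hinj
    simp only [Set.InjOn, not_forall] at hinj
    obtain ⟨g1, hg1, g2, hg2, hv12, hne⟩ := hinj
    have hg1 : g1 ∈ s := hg1
    have hg2 : g2 ∈ s := hg2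
    set x := v g1 with hx
    have hcl : 2 ≤ (s.filter fun g => v g = x).card := by
      have : ({g1, g2} : Finset ι) ⊆ s.filter fun g => v g = x := by
        intro g hg
        simp only [Finset.mem_insert, Finset.mem_singleton] at hg
        rcases hg with rfl | rfl
        · exact Finset.mem_filter.mpr ⟨hg1, rfl⟩
        · exact Finset.mem_filter.mpr ⟨hg2, hv12.symm⟩
      have h := Finset.card_le_card this
      rwa [Finset.card_pair hne] at h
    have hz := hyp x hcl
    have hzpos : 0 < (k.filter fun q => w q = x).card := by omega
    obtain ⟨q1, hq1⟩ := Finset.card_pos.mp hzpos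
    obtain ⟨hq1k, hq1x⟩ := Finset.mem_filter.mp hq1
    have e1 : ∀ y, ((s.erase g1).filter fun g => v g = y) = (s.filter fun g => v g = y).erase g1 :=
      fun y => by ext g; simp only [Finset.mem_filter, Finset.mem_erase]; tauto
    have e2 : ∀ y, ((k.erase q1).filter fun q => w q = y) = (k.filter fun q => w q = y).erase q1 :=
      fun y => by ext g; simp only [Finset.mem_filter, Finset.mem_erase]; tauto
    have hg1f : g1 ∈ s.filter fun g => v g = x := Finset.mem_filter.mpr ⟨hg1, rfl⟩
    have hIH := ih (s.erase g1) v (k.erase q1) w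
      (by rw [Finset.card_erase_of_mem hg1]; omega)
      (by rw [Finset.card_erase_of_mem hg1, Finset.card_erase_of_mem hq1k]; omega)
      (by
        intro y hy
        rw [e1] at hy ⊢
        rw [e2]
        by_cases hyx : y = x
        · subst hyx
          rw [Finset.card_erase_of_mem hg1f, Finset.card_erase_of_mem hq1]
          omega
        · rw [Finset.erase_eq_of_notMem] at hy ⊢
          · rw [Finset.erase_eq_of_notMem]
            · exact hyp y hy
            · intro h
              exact hyx ((Finset.mem_filter.mp h).2 ▸ hq1x)
          · intro h
            exact hyx (Finset.mem_filter.mp h).2.symm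
          · intro h
            exact hyx (Finset.mem_filter.mp h).2.symm)
    rw [← Finset.add_sum_erase s _ hg1, ← Finset.add_sum_erase s v hg1,
      ← Finset.add_sum_erase k w hq1k]
    have t0 : (∏ q ∈ k, (v g1 - w q)) = 0 :=
      Finset.prod_eq_zero hq1k (by rw [hq1x, hx, sub_self])
    rw [t0, zero_div, zero_add, hq1x, ← hx]
    have : x + ∑ g ∈ s.erase g1, v g - (x + ∑ q ∈ k.erase q1, w q) =
      ∑ g ∈ s.erase g1, v g - ∑ q ∈ k.erase q1, w q := by ring
    rw [this, ← hIH]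
    refine Finset.sum_congr rfl fun g hg => ?_
    obtain ⟨hgne, hgs⟩ := Finset.mem_erase.mp hg
    by_cases hvg : v g = x
    · have a1 : (∏ q ∈ k, (v g - w q)) = 0 :=
        Finset.prod_eq_zero hq1k (by rw [hq1x, hvg, sub_self])
      have a2 : (∏ q ∈ k.erase q1, (v g - w q)) = 0 := by
        have : 0 < ((k.filter fun q => w q = x).erase q1).card := by
          rw [Finset.card_erase_of_mem hq1]; omega
        obtain ⟨q2, hq2⟩ := Finset.card_pos.mp this
        obtain ⟨hq2ne, hq2⟩ := Finset.mem_erase.mp hq2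
        obtain ⟨hq2k, hq2x⟩ := Finset.mem_filter.mp hq2
        exact Finset.prod_eq_zero (Finset.mem_erase.mpr ⟨hq2ne, hq2k⟩)
          (by rw [hq2x, hvg, sub_self])
      rw [a1, a2, zero_div, zero_div]
    · have hne0 : v g - x ≠ 0 := sub_ne_zero.mpr hvg
      rw [← Finset.mul_prod_erase k _ hq1k, hq1x,
        ← Finset.mul_prod_erase (s.erase g) (fun g' => v g - v g')
          (Finset.mem_erase.mpr ⟨hgne.symm, hg1⟩), ← hx, mul_div_mul_left _ _ hne0,
        Finset.erase_right_comm]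
end Residue

/-- Colors of the 27 positions; the last three have color 7 (carrying constants). -/
def col : Fin 27 → ℕ :=
  ![1, 2, 3, 4, 5, 3, 6, 2, 5, 1, 3, 2, 4, 1, 3, 2, 5, 3, 6, 4, 5, 3, 2, 1, 7, 7, 7]
/-- Shifted ranks of the positions. -/
def rkk : Fin 27 → ℕ :=
  ![1, 2, 3, 4, 4, 5, 5, 6, 6, 7, 7, 8, 8, 9, 9, 10, 10, 11, 11, 12, 12, 13, 14, 15, 0, 8, 16]
/-- Adjacency of colors in `E₇`. -/
def adj (i j : ℕ) : Bool :=
  (i, j) ∈ ([(1, 2), (2, 3), (3, 4), (3, 5), (5, 6), (1, 7)] : List (ℕ × ℕ)) ∨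
  (j, i) ∈ ([(1, 2), (2, 3), (3, 4), (3, 5), (5, 6), (1, 7)] : List (ℕ × ℕ))
/-- Covering relation. -/
def cov (p q : Fin 27) : Bool := adj (col p) (col q) && (rkk q == rkk p + 1)
/-- Coefficients of the principal element. -/
def kap (i : ℕ) : ℕ := [0, 16, 30, 42, 22, 30, 16, 0].getD i 0

/-- Order-reversing labellings. -/
def Mono (c : Fin 27 → ℤ) : Prop := ∀ p q, cov p q = true → c q ≤ c p

lemma between : ∀ p q : Fin 27, rkk p + 2 ≤ rkk q → (col p = col q ∨ adj (col p) (col q) = true) →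
    ∃ m : Fin 27, rkk p < rkk m ∧ rkk m < rkk q ∧
      (col p = col m ∨ adj (col p) (col m) = true) ∧
      (col m = col q ∨ adj (col m) (col q) = true) := by decide +kernel

lemma same_ne_one : ∀ p q : Fin 27, col p = col q → rkk q ≠ rkk p + 1 := by decide +kernel

lemma Mono.le {c : Fin 27 → ℤ} (hc : Mono c) (n : ℕ) : ∀ p q : Fin 27, rkk q - rkk p = n →
    rkk p < rkk q → (col p = col q ∨ adj (col p) (col q) = true) → c q ≤ c p := by
  induction n using Nat.strong_induction_on with
  | _ n ih =>
    intro p q hn hlt hrel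
    by_cases h2 : rkk p + 2 ≤ rkk q
    · obtain ⟨m, h1, h2, h3, h4⟩ := between p q h2 hrel
      exact (ih _ (by omega) m q rfl h2 h4).trans (ih _ (by omega) p m rfl h1 h3)
    · have h1 : rkk q = rkk p + 1 := by omega
      rcases hrel with h | h
      · exact absurd h1 (same_ne_one p q h)
      · exact hc p q (by simp [cov, h, h1])

/-- Shifted labels. -/
def z (c : Fin 27 → ℤ) (p : Fin 27) : ℝ := (c p : ℝ) - (rkk p : ℝ) / 2
/-- Factors of the edge products. -/
def fac (p q : Fin 27) (d : ℝ) : ℝ :=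
  if col p = col q then (d * (d + 1))⁻¹ else if adj (col p) (col q) = true then d + 1 / 2 else 1
/-- Edge product of the edge raising position `p`. -/
def U (c : Fin 27 → ℤ) (p : Fin 27) : ℝ :=
  -(kap (col p) : ℝ) * ∏ q ∈ univ.erase p, fac p q (z c p - z c q)
/-- Unit vector. -/
def e (p : Fin 27) : Fin 27 → ℤ := Pi.single p 1

lemma z_add_self (c : Fin 27 → ℤ) (p : Fin 27) : z (c + e p) p = z c p + 1 := by
  simp [z, e]; ring
lemma z_add_ne (c : Fin 27 → ℤ) {p q : Fin 27} (h : q ≠ p) : z (c + e p) q = z c q := by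
  simp [z, e, h]
lemma z_sub_self (c : Fin 27 → ℤ) (p : Fin 27) : z (c - e p) p = z c p - 1 := by
  simp [z, e]; ring
lemma z_sub_ne (c : Fin 27 → ℤ) {p q : Fin 27} (h : q ≠ p) : z (c - e p) q = z c q := by
  simp [z, e, h]

lemma adj_comm' (i j : ℕ) : adj i j = adj j i := by
  simp only [adj, or_comm]

lemma adj_irrefl : ∀ p q : Fin 27, adj (col p) (col q) = true → col p ≠ col q := by decide +kernel

lemma fac_diamond (p q : Fin 27) (d : ℝ) :
    fac p q d * fac q p (-d) = fac p q (d - 1) * fac q p (-d - 1) := by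
  unfold fac
  rw [adj_comm' (col q) (col p)]
  by_cases h : col p = col q
  · rw [if_pos h, if_pos h.symm, if_pos h, if_pos h.symm, ← mul_inv, ← mul_inv]
    congr 1
    ring
  · rw [if_neg h, if_neg (Ne.symm h), if_neg h, if_neg (Ne.symm h)]
    split_ifs
    · ring
    · rfl

lemma diamond (c : Fin 27 → ℤ) (p q : Fin 27) (h : p ≠ q) :
    U c p * U c q = U (c + e q) p * U (c + e p) q := by
  unfold U
  have hq : q ∈ univ.erase p := by simp [h.symm]
  have hp : p ∈ univ.erase q := by simp [h]
  rw [← Finset.mul_prod_erase _ _ hq, ← Finset.mul_prod_erase _ _ hp,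
    ← Finset.mul_prod_erase _ _ hq, ← Finset.mul_prod_erase _ _ hp]
  rw [z_add_self, z_add_self, z_add_ne c h, z_add_ne c h.symm]
  have e1 : ∏ x ∈ (univ.erase p).erase q, fac p x (z c p - z (c + e q) x) =
      ∏ x ∈ (univ.erase p).erase q, fac p x (z c p - z c x) :=
    Finset.prod_congr rfl fun x hx => by rw [z_add_ne c (Finset.mem_erase.mp hx).1]
  have e2 : ∏ x ∈ (univ.erase q).erase p, fac q x (z c q - z (c + e p) x) =
      ∏ x ∈ (univ.erase q).erase p, fac q x (z c q - z c x) :=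
    Finset.prod_congr rfl fun x hx => by rw [z_add_ne c (Finset.mem_erase.mp hx).1]
  rw [e1, e2]
  have hd := fac_diamond p q (z c p - z c q)
  rw [show -(z c p - z c q) = z c q - z c p by ring,
    show z c p - z c q - 1 = z c p - (z c q + 1) by ring,
    show z c q - z c p - 1 = z c q - (z c p + 1) by ring] at hd
  linear_combination ((kap (col p) : ℝ) * (kap (col q) : ℝ) *
    (∏ x ∈ (univ.erase p).erase q, fac p x (z c p - z c x)) *
    (∏ x ∈ (univ.erase q).erase p, fac q x (z c q - z c x))) * hd

/-- Sign of a factor. -/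
def sg (p q : Fin 27) : ℤ := if adj (col p) (col q) = true ∧ rkk q < rkk p then -1 else 1

lemma sg_prod : ∀ p : Fin 27, col p ≠ 7 → ∏ q ∈ univ.erase p, sg p q = -1 := by decide +kernel
lemma parity_same : ∀ p q : Fin 27, col p = col q → rkk p % 2 = rkk q % 2 := by decide +kernel
lemma parity_adj : ∀ p q : Fin 27, adj (col p) (col q) = true → rkk p % 2 ≠ rkk q % 2 := by
  decide +kernel

lemma sg_fac_nonneg (c : Fin 27 → ℤ) (hc : Mono c) (p q : Fin 27) :
    0 ≤ (sg p q : ℝ) * fac p q (z c p - z c q) := by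
  unfold fac sg
  by_cases h : col p = col q
  · have h1 : ¬ (adj (col p) (col q) = true) := fun h' => adj_irrefl p q h' h
    rw [if_pos h, if_neg (fun h' => h1 h'.1), Int.cast_one, one_mul, inv_nonneg]
    have hpar := parity_same p q h
    obtain ⟨m, hm⟩ : ∃ m : ℤ, (rkk p : ℤ) - rkk q = 2 * m :=
      ⟨((rkk p : ℤ) - rkk q) / 2, by omega⟩
    have hm' : (rkk p : ℝ) - rkk q = 2 * m := by exact_mod_cast hm
    have hd : z c p - z c q = ((c p - c q - m : ℤ) : ℝ) := by
      unfold z; push_cast; linarith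
    rw [hd]
    have : 0 ≤ (c p - c q - m) * (c p - c q - m + 1) := by
      rcases lt_or_ge (c p - c q - m) 0 with h | h
      · nlinarith
      · nlinarith
    exact_mod_cast this
  · rw [if_neg h]
    by_cases ha : adj (col p) (col q) = true
    · have hne := parity_adj p q ha
      rw [if_pos ha]
      rcases lt_or_ge (rkk q) (rkk p) with hlt | hge
      · rw [if_pos ⟨ha, hlt⟩]
        have := hc.le _ q p rfl hlt (Or.inr (adj_comm' _ _ ▸ ha))
        have h1 : (c p : ℝ) ≤ c q := by exact_mod_cast this
        have h2 : (rkk q : ℝ) + 1 ≤ rkk p := by exact_mod_cast hlt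
        unfold z
        push_cast
        linarith
      · have hlt : rkk p < rkk q := lt_of_le_of_ne hge (fun h' => hne (by rw [h']))
        rw [if_neg (fun h' => absurd h'.2 (by omega))]
        have := hc.le _ p q rfl hlt (Or.inr ha)
        have h1 : (c q : ℝ) ≤ c p := by exact_mod_cast this
        have h2 : (rkk p : ℝ) + 1 ≤ rkk q := by exact_mod_cast hlt
        unfold z
        push_cast
        linarith
    · rw [if_neg ha, if_neg (fun h' => ha h'.1)]
      simp

lemma U_nonneg (c : Fin 27 → ℤ) (hc : Mono c) (p : Fin 27) (hp : col p ≠ 7) : 0 ≤ U c p := by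
  have h1 : ((∏ q ∈ univ.erase p, sg p q : ℤ) : ℝ) = -1 := by rw [sg_prod p hp]; simp
  have h2 : U c p = (kap (col p) : ℝ) * ∏ q ∈ univ.erase p, ((sg p q : ℝ) *
      fac p q (z c p - z c q)) := by
    rw [Finset.prod_mul_distrib]
    push_cast at h1
    rw [h1]
    unfold U
    ring
  rw [h2]
  exact mul_nonneg (Nat.cast_nonneg _) (Finset.prod_nonneg fun q _ => sg_fac_nonneg c hc p q)

lemma U_zero_of (c : Fin 27 → ℤ) (p q : Fin 27) (ha : adj (col p) (col q) = true)
    (h : z c p - z c q + 1 / 2 = 0) : U c p = 0 := by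
  unfold U
  have hne := adj_irrefl p q ha
  rw [Finset.prod_eq_zero (i := q), mul_zero]
  · simp only [Finset.mem_erase, Finset.mem_univ, and_true]
    rintro rfl
    exact hne rfl
  · unfold fac
    rw [if_neg hne, if_pos ha, h]

lemma U_up_zero (c : Fin 27 → ℤ) (hc : Mono c) (p : Fin 27) (h : ¬ Mono (c + e p)) :
    U c p = 0 := by
  unfold Mono at h
  push Not at h
  obtain ⟨x, y, hxy, hlt⟩ := h
  have h0 := hc x y hxy
  simp only [cov, Bool.and_eq_true, beq_iff_eq] at hxy
  have hyp : y = p := by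
    by_contra hne
    have : (e p) y = 0 := Pi.single_eq_of_ne hne _
    have h2 : 0 ≤ (e p) x := by
      by_cases hx : x = p
      · subst hx; simp [e]
      · rw [show (e p) x = 0 from Pi.single_eq_of_ne hx _]
    simp only [Pi.add_apply, this] at hlt
    omega
  subst hyp
  have hxne : x ≠ y := by rintro rfl; exact adj_irrefl _ _ hxy.1 rfl
  have h1 : (e y) x = 0 := Pi.single_eq_of_ne hxne _
  have h2 : (e y) y = 1 := Pi.single_eq_same _ _
  simp only [Pi.add_apply, h1, h2] at hlt
  have hcc : c x = c y := by omega
  apply U_zero_of c y x (adj_comm' _ _ ▸ hxy.1)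
  unfold z
  rw [hcc, hxy.2]
  push_cast
  ring

lemma U_down_zero (c : Fin 27 → ℤ) (hc : Mono c) (p : Fin 27) (h : ¬ Mono (c - e p)) :
    U (c - e p) p = 0 := by
  unfold Mono at h
  push Not at h
  obtain ⟨x, y, hxy, hlt⟩ := h
  have h0 := hc x y hxy
  simp only [cov, Bool.and_eq_true, beq_iff_eq] at hxy
  have hyp : x = p := by
    by_contra hne
    have : (e p) x = 0 := Pi.single_eq_of_ne hne _
    have h2 : 0 ≤ (e p) y := by
      by_cases hx : y = p
      · subst hx; simp [e]
      · rw [show (e p) y = 0 from Pi.single_eq_of_ne hx _]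
    simp only [Pi.sub_apply, this] at hlt
    omega
  subst hyp
  have hxne : y ≠ x := by rintro rfl; exact adj_irrefl _ _ hxy.1 rfl
  have h1 : (e x) y = 0 := Pi.single_eq_of_ne hxne _
  have h2 : (e x) x = 1 := Pi.single_eq_same _ _
  simp only [Pi.sub_apply, h1, h2] at hlt
  have hcc : c x = c y := by omega
  apply U_zero_of _ x y hxy.1
  rw [z_sub_self, z_sub_ne c hxne]
  unfold z
  rw [hcc, hxy.2]
  push_cast
  ring

/-- Positions of color `i`. -/
def SS (i : ℕ) : Finset (Fin 27) := univ.filter fun p => col p = i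
/-- Positions of color adjacent to `i`. -/
def TT (i : ℕ) : Finset (Fin 27) := univ.filter fun q => adj i (col q) = true

lemma U_split (c : Fin 27 → ℤ) (p : Fin 27) :
    ∏ q ∈ univ.erase p, fac p q (z c p - z c q) =
      (∏ q ∈ TT (col p), (z c p - (z c q - 1 / 2))) /
      (∏ q ∈ (SS (col p)).erase p, ((z c p - z c q) * (z c p - (z c q - 1)))) := by
  have h1 : ∀ q ∈ univ.erase p, fac p q (z c p - z c q) =
      (if adj (col p) (col q) = true then (z c p - (z c q - 1 / 2)) else 1) *
      (if col q = col p then ((z c p - z c q) * (z c p - (z c q - 1)))⁻¹ else 1) := by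
    intro q _
    unfold fac
    by_cases h : col p = col q
    · have ha : ¬ (adj (col p) (col q) = true) := fun h' => adj_irrefl p q h' h
      rw [if_pos h, if_neg ha, if_pos h.symm, one_mul]
      congr 1; ring
    · rw [if_neg h, if_neg (Ne.symm h), mul_one]
      split_ifs
      · ring
      · rfl
  rw [Finset.prod_congr rfl h1, Finset.prod_mul_distrib, ← Finset.prod_filter,
    ← Finset.prod_filter, Finset.prod_inv_distrib, div_eq_mul_inv]
  congr 1
  · apply Finset.prod_congr _ fun _ _ => rfl
    ext q
    simp only [TT, Finset.mem_filter, Finset.mem_erase, Finset.mem_univ, and_true, true_and]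
    constructor
    · exact fun h => h.2
    · intro h
      refine ⟨?_, h⟩
      rintro rfl
      exact adj_irrefl _ _ h rfl
  · congr 1
    apply Finset.prod_congr _ fun _ _ => rfl
    ext q
    simp only [SS, Finset.mem_filter, Finset.mem_erase, Finset.mem_univ, and_true, true_and]

/-- The nodes of the interpolation. -/
def vv (c : Fin 27 → ℤ) (g : Fin 27 × Bool) : ℝ := if g.2 then z c g.1 else z c g.1 - 1

lemma card_SS_TT : ∀ i : Fin 7, i ≠ 0 → 2 * (SS i).card = (TT i).card := by decide +kernel

lemma two_between : ∀ p q : Fin 27, col p = col q → rkk q = rkk p + 2 → col p ≠ 7 →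
    ∃ m n : Fin 27, m ≠ n ∧ cov p m = true ∧ cov m q = true ∧ cov p n = true ∧
      cov n q = true := by decide +kernel

lemma same_gap : ∀ p q : Fin 27, col p = col q → p ≠ q → rkk p + 2 ≤ rkk q ∨ rkk q + 2 ≤ rkk p := by
  decide +kernel

lemma z_gap (c : Fin 27 → ℤ) (hc : Mono c) (p q : Fin 27) (h : col p = col q) 
    (hlt : rkk p + 2 ≤ rkk q) : z c q + 1 ≤ z c p := by
  have := hc.le _ p q rfl (by omega) (Or.inl h)
  have h1 : (c q : ℝ) ≤ c p := by exact_mod_cast this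
  have h2 : (rkk p : ℝ) + 2 ≤ rkk q := by exact_mod_cast hlt
  unfold z
  linarith

lemma z_inj (c : Fin 27 → ℤ) (hc : Mono c) (p q : Fin 27) (h : col p = col q)
    (hz : z c p = z c q) : p = q := by
  by_contra hne
  rcases same_gap p q h hne with h1 | h1
  · have := z_gap c hc p q h h1; linarith
  · have := z_gap c hc q p h.symm h1; linarith

lemma collision (c : Fin 27 → ℤ) (hc : Mono c) (i : ℕ) (hi : i ≠ 7) (x : ℝ)
    (h : 2 ≤ ((SS i ×ˢ (univ : Finset Bool)).filter fun g => vv c g = x).card) :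
    ((SS i ×ˢ (univ : Finset Bool)).filter fun g => vv c g = x).card ≤
      ((TT i).filter fun q => z c q - 1 / 2 = x).card := by
  have hm : ∀ q b, (q, b) ∈ ((SS i ×ˢ (univ : Finset Bool)).filter fun g => vv c g = x) →
      col q = i ∧ vv c (q, b) = x := by
    intro q b h
    rw [Finset.mem_filter, Finset.mem_product] at h
    exact ⟨(Finset.mem_filter.mp h.1.1).2, h.2⟩
  obtain ⟨g1, hg1, g2, hg2, hne⟩ := Finset.one_lt_card.mp h
  have key : ∃ p p' : Fin 27, col p = i ∧ col p' = i ∧ z c p - 1 = x ∧ z c p' = x := by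
    obtain ⟨p1, b1⟩ := g1
    obtain ⟨p2, b2⟩ := g2
    replace hg1 := hm _ _ hg1
    replace hg2 := hm _ _ hg2
    simp only [vv] at hg1 hg2
    rcases b1 <;> rcases b2
    · simp at hg1 hg2
      exact absurd (z_inj c hc p1 p2 (by omega) (by linarith)) (fun h => hne (by rw [h]))
    · simp at hg1 hg2
      exact ⟨p1, p2, hg1.1, hg2.1, hg1.2, hg2.2⟩
    · simp at hg1 hg2
      exact ⟨p2, p1, hg2.1, hg1.1, hg2.2, hg1.2⟩
    · simp at hg1 hg2
      exact absurd (z_inj c hc p1 p2 (by omega) (by linarith)) (fun h => hne (by rw [h]))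
  obtain ⟨p, p', hp, hp', hz, hz'⟩ := key
  have hpp : p ≠ p' := by rintro rfl; linarith
  have hle : rkk p + 2 ≤ rkk p' := by
    rcases same_gap p p' (by omega) hpp with h1 | h1
    · exact h1
    · have := z_gap c hc p' p (by omega) h1; linarith
  have hmono := hc.le _ p p' rfl (by omega) (Or.inl (by omega))
  have hzz : z c p - 1 = z c p' := by linarith
  have h1 : (c p' : ℝ) ≤ c p := by exact_mod_cast hmono
  have h2 : (rkk p : ℝ) + 2 ≤ rkk p' := by exact_mod_cast hle
  have hrk : rkk p' = rkk p + 2 := by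
    have : (rkk p' : ℝ) ≤ rkk p + 2 := by unfold z at hzz; linarith
    have : rkk p' ≤ rkk p + 2 := by exact_mod_cast this
    omega
  have hcc : c p = c p' := by
    have : (c p : ℝ) ≤ c p' := by unfold z at hzz; linarith
    have : c p ≤ c p' := by exact_mod_cast this
    omega
  obtain ⟨m, n, hmn, m1, m2, n1, n2⟩ := two_between p p' (by omega) hrk (by omega)
  have hmem : ∀ m, cov p m = true → cov m p' = true →
      m ∈ (TT i).filter fun q => z c q - 1 / 2 = x := by
    intro m m1 m2
    have a1 := hc p m m1
    have a2 := hc m p' m2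
    have a3 : c m = c p := by omega
    simp only [cov, Bool.and_eq_true, beq_iff_eq] at m1
    simp only [TT, Finset.mem_filter, Finset.mem_univ, true_and]
    refine ⟨hp ▸ m1.1, ?_⟩
    rw [← hz]
    unfold z
    rw [a3, m1.2]
    push_cast
    ring
  have hge : 2 ≤ ((TT i).filter fun q => z c q - 1 / 2 = x).card := by
    rw [← Finset.card_pair hmn]
    apply Finset.card_le_card
    intro q hq
    simp only [Finset.mem_insert, Finset.mem_singleton] at hq
    rcases hq with rfl | rfl
    · exact hmem _ m1 m2
    · exact hmem _ n1 n2
  refine le_trans ?_ hge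
  have hsub : ((SS i ×ˢ (univ : Finset Bool)).filter fun g => vv c g = x) ⊆
      {(p, false), (p', true)} := by
    rintro ⟨q, b⟩ hq
    replace hq := hm _ _ hq
    simp only [vv] at hq
    rcases b
    · simp at hq
      rw [z_inj c hc q p (by omega) (by linarith)]
      simp
    · simp at hq
      rw [z_inj c hc q p' (by omega) (by linarith)]
      simp
  exact (Finset.card_le_card hsub).trans Finset.card_le_two

lemma color_sum (c : Fin 27 → ℤ) (hc : Mono c) (i : Fin 7) (hi0 : i ≠ 0) :
    ∑ p ∈ SS i, (U (c - e p) p - U c p) =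
      (kap i : ℝ) * (2 * ∑ p ∈ SS i, z c p - ∑ q ∈ TT i, z c q) := by
  have hcard := card_SS_TT i hi0
  have hL := lagr _ (SS i ×ˢ (univ : Finset Bool)) (vv c) (TT i) (fun q => z c q - 1 / 2) rfl
    (by rw [Finset.card_product, Finset.card_univ, Fintype.card_bool, ← hcard, mul_comm])
    (fun x => collision c hc i (by have := i.2; omega) x)
  have herase : ∀ p ∈ SS i, ∀ b : Bool, ∀ y : ℝ,
      ∏ g ∈ (SS i ×ˢ (univ : Finset Bool)).erase (p, b), (y - vv c g) =
      (y - vv c (p, !b)) * ∏ q ∈ (SS i).erase p, ((y - z c q) * (y - (z c q - 1))) := by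
    intro p hp b y
    have hset : (SS i ×ˢ (univ : Finset Bool)).erase (p, b) =
        insert (p, !b) (((SS i).erase p) ×ˢ (univ : Finset Bool)) := by
      ext ⟨q, b'⟩
      simp only [Finset.mem_erase, Finset.mem_product, Finset.mem_univ, and_true,
        Finset.mem_insert, Prod.mk.injEq, ne_eq]
      by_cases hq : q = p
      · subst hq
        cases b <;> cases b' <;> simp [hp]
      · simp [hq]
    rw [hset, Finset.prod_insert (by simp), Finset.prod_product]
    congr 1
    refine Finset.prod_congr rfl fun q _ => ?_
    rw [Fintype.prod_bool]
    simp [vv]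
  rw [Finset.sum_product, Finset.sum_product] at hL
  have hterm : ∀ p ∈ SS i, U (c - e p) p - U c p = (kap i : ℝ) * ∑ b : Bool,
      (∏ q ∈ TT i, (vv c (p, b) - (z c q - 1 / 2))) /
        (∏ g' ∈ (SS i ×ˢ (univ : Finset Bool)).erase (p, b), (vv c (p, b) - vv c g')) := by
    intro p hp
    have hcol : col p = i := by simpa [SS] using hp
    rw [Fintype.sum_bool, herase p hp, herase p hp]
    unfold U
    rw [U_split, U_split, hcol, z_sub_self]
    have e1 : ∏ q ∈ TT i, (z c p - 1 - (z (c - e p) q - 1 / 2)) =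
        ∏ q ∈ TT i, (z c p - 1 - (z c q - 1 / 2)) := by
      refine Finset.prod_congr rfl fun q hq => ?_
      rw [z_sub_ne c]
      rintro rfl
      simp only [TT, Finset.mem_filter, Finset.mem_univ, true_and, ← hcol] at hq
      exact adj_irrefl _ _ hq rfl
    have e2 : ∏ q ∈ (SS i).erase p, ((z c p - 1 - z (c - e p) q) *
          (z c p - 1 - (z (c - e p) q - 1))) =
        ∏ q ∈ (SS i).erase p, ((z c p - 1 - z c q) * (z c p - 1 - (z c q - 1))) := by
      refine Finset.prod_congr rfl fun q hq => ?_
      rw [z_sub_ne c (Finset.mem_erase.mp hq).1]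
    rw [e1, e2]
    simp only [vv, if_true, Bool.not_true, Bool.not_false, Bool.false_eq_true, if_false]
    have e3 : z c p - (z c p - 1) = 1 := by ring
    have e4 : z c p - 1 - z c p = -1 := by ring
    rw [e3, e4, one_mul, neg_one_mul, div_neg]
    ring
  rw [Finset.sum_congr rfl hterm, ← Finset.mul_sum, hL]
  congr 1
  have s1 : ∀ p ∈ SS i, ∑ b : Bool, vv c (p, b) = 2 * z c p - 1 := by
    intro p _
    rw [Fintype.sum_bool]
    simp [vv]
    ring
  have hcard' : (2 : ℝ) * ((SS i).card : ℝ) = (TT i).card := by exact_mod_cast hcard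
  rw [Finset.sum_congr rfl s1, Finset.sum_sub_distrib, Finset.sum_sub_distrib, ← Finset.mul_sum]
  simp only [Finset.sum_const, nsmul_eq_mul, mul_one]
  rw [← hcard']
  ring

/-- The 24 genuine positions. -/
def PP : Finset (Fin 27) := univ.filter fun p => col p ≠ 7

lemma coef : ∀ q : Fin 27, ∑ i ∈ (univ : Finset (Fin 7)).erase 0, (kap i : ℤ) *
    (2 * (if col q = i then 1 else 0) - (if adj i (col q) = true then 1 else 0)) =
    if col q = 7 then -16 else 2 := by decide +kernel

lemma total_sum (c : Fin 27 → ℤ) (hc : Mono c) (h24 : c 26 = 0) :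
    ∑ p ∈ PP, (U (c - e p) p - U c p) =
      2 * ∑ p ∈ PP, (c p : ℝ) - 16 * (c 24 + c 25) := by
  have h1 : ∑ p ∈ PP, (U (c - e p) p - U c p) =
      ∑ i ∈ (univ : Finset (Fin 7)).erase 0, ∑ p ∈ SS i, (U (c - e p) p - U c p) := by
    rw [← Finset.sum_biUnion]
    · apply Finset.sum_congr _ fun _ _ => rfl
      decide +kernel
    · intro i _ j _ hij
      rw [Function.onFun, Finset.disjoint_left]
      intro p hp hp'
      simp only [SS, Finset.mem_filter, Finset.mem_univ, true_and] at hp hp'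
      exact hij (Fin.ext (by omega))
  have h2 : ∀ i ∈ (univ : Finset (Fin 7)).erase 0, ∑ p ∈ SS i, (U (c - e p) p - U c p) =
      ∑ q : Fin 27, (((kap i : ℤ) * (2 * (if col q = i then 1 else 0) -
        (if adj i (col q) = true then 1 else 0)) : ℤ) : ℝ) * z c q := by
    intro i hi
    rw [color_sum c hc i (Finset.mem_erase.mp hi).1]
    simp only [SS, TT, Finset.sum_filter]
    rw [Finset.mul_sum, ← Finset.sum_sub_distrib, Finset.mul_sum]
    refine Finset.sum_congr rfl fun q _ => ?_
    push_cast
    split_ifs <;> ring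
  rw [h1, Finset.sum_congr rfl h2, Finset.sum_comm]
  have h3 : ∀ q : Fin 27, ∑ i ∈ (univ : Finset (Fin 7)).erase 0,
      (((kap i : ℤ) * (2 * (if col q = i then 1 else 0) -
        (if adj i (col q) = true then 1 else 0)) : ℤ) : ℝ) * z c q =
      (if col q = 7 then -16 else 2) * z c q := by
    intro q
    rw [← Finset.sum_mul, ← Int.cast_sum, coef q]
    split_ifs <;> simp
  rw [Finset.sum_congr rfl fun q _ => h3 q]
  have h26 : (c 26 : ℝ) = 0 := by exact_mod_cast h24
  have hr : ∑ q : Fin 27, (if col q = 7 then (-16 : ℤ) else 2) * (rkk q : ℤ) = 0 := by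
    decide +kernel
  have hr' : ∑ q : Fin 27, (if col q = 7 then (-16 : ℝ) else 2) * (rkk q : ℝ) = 0 := by
    exact_mod_cast hr
  have h4 : ∑ q : Fin 27, (if col q = 7 then (-16 : ℝ) else 2) * z c q =
      ∑ q : Fin 27, (if col q = 7 then (-16 : ℝ) else 2) * (c q : ℝ) := by
    have : ∀ q, (if col q = 7 then (-16 : ℝ) else 2) * z c q =
        (if col q = 7 then (-16 : ℝ) else 2) * (c q : ℝ) -
        ((if col q = 7 then (-16 : ℝ) else 2) * (rkk q : ℝ)) / 2 := by
      intro q; unfold z; ring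
    rw [Finset.sum_congr rfl fun q _ => this q, Finset.sum_sub_distrib, ← Finset.sum_div, hr']
    ring
  rw [h4, ← Finset.sum_filter_add_sum_filter_not univ (fun q => col q = 7)]
  have h5 : (univ.filter fun q : Fin 27 => col q = 7) = {24, 25, 26} := by decide +kernel
  have h6 : ∑ q ∈ univ.filter (fun q : Fin 27 => col q = 7),
      (if col q = 7 then (-16 : ℝ) else 2) * (c q : ℝ) = -16 * (c 24 + c 25) := by
    rw [Finset.sum_congr rfl fun q hq => by rw [if_pos (Finset.mem_filter.mp hq).2], h5,
      Finset.sum_insert (by decide), Finset.sum_insert (by decide), Finset.sum_singleton, h26]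
    ring
  have h7 : ∑ q ∈ univ.filter (fun q : Fin 27 => ¬ col q = 7),
      (if col q = 7 then (-16 : ℝ) else 2) * (c q : ℝ) = 2 * ∑ p ∈ PP, (c p : ℝ) := by
    rw [Finset.sum_congr rfl fun q hq => by rw [if_neg (Finset.mem_filter.mp hq).2],
      ← Finset.mul_sum]
    rfl
  rw [h6, h7]
  ring

end E6C

namespace E6C
open Finset

/-- The listing of the positions (the last three entries are dummies). -/
def posn : Fin 27 → N6 × ℕ :=
  ![(m1, 0), (m2, 1), (m3, 2), (m4, 3), (m5, 3), (m3, 4), (m6, 4), (m2, 5), (m5, 5),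
   (m1, 6), (m3, 6), (m2, 7), (m4, 7), (m1, 8), (m3, 8), (m2, 9), (m5, 9), (m3, 10),
   (m6, 10), (m4, 11), (m5, 11), (m3, 12), (m2, 13), (m1, 14), (m1, 100), (m1, 100), (m1, 100)]

lemma posn_mem : ∀ p, posn p ∈ pos24 ↔ col p ≠ 7 := by decide +kernel
lemma posn_surj : ∀ x ∈ pos24, ∃ p, posn p = x := by decide +kernel
lemma posn_inj : ∀ p q, col p ≠ 7 → posn p = posn q → p = q := by decide +kernel
lemma cov_step : ∀ p q, col p ≠ 7 → col q ≠ 7 →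
    (cov p q = true ↔ adj6 (posn p).1 (posn q).1 ∧ (posn q).2 = (posn p).2 + 1) := by
  decide +kernel
lemma cov_bdry : ∀ p q, cov p q = true → (col p = 7 ∨ col q = 7) →
    (p, q) ∈ ([(24, 0), (9, 25), (25, 13), (23, 26)] : List (Fin 27 × Fin 27)) := by
  decide +kernel
lemma has_lower : ∀ p : Fin 27, p ≠ 24 → ∃ q, cov q p = true := by decide +kernel
lemma has_upper : ∀ p : Fin 27, p ≠ 26 → ∃ q, cov p q = true := by decide +kernel
lemma rkk_le : ∀ p, rkk p ≤ 16 := by decide +kernel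
lemma col7 : ∀ p, col p = 7 → p = 24 ∨ p = 25 ∨ p = 26 := by decide +kernel
lemma mem_PP {p : Fin 27} : p ∈ PP ↔ col p ≠ 7 := by simp [PP]

variable {a b : ℕ}

/-- Extension of a labelling by constants. -/
def ext (t : L6ab a b) (p : Fin 27) : ℤ :=
  if h : posn p ∈ pos24 then (t.1 ⟨posn p, h⟩ : ℤ) else
    if p = 24 then (a : ℤ) + b else if p = 25 then (a : ℤ) else 0

/-- Valid extended labellings. -/
def V (a b : ℕ) (c : Fin 27 → ℤ) : Prop :=
  Mono c ∧ c 24 = (a : ℤ) + b ∧ c 25 = a ∧ c 26 = 0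

lemma ext_of (t : L6ab a b) (p : Fin 27) (h : posn p ∈ pos24) : ext t p = t.1 ⟨posn p, h⟩ := by
  unfold ext; rw [dif_pos h]

lemma ext_24 (t : L6ab a b) : ext t 24 = (a : ℤ) + b := by
  unfold ext; rw [dif_neg (by decide +kernel), if_pos rfl]
lemma ext_25 (t : L6ab a b) : ext t 25 = (a : ℤ) := by
  unfold ext; rw [dif_neg (by decide +kernel), if_neg (by decide), if_pos rfl]
lemma ext_26 (t : L6ab a b) : ext t 26 = 0 := by
  unfold ext; rw [dif_neg (by decide +kernel), if_neg (by decide), if_neg (by decide)]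

lemma ext_valid (t : L6ab a b) : V a b (ext t) := by
  refine ⟨?_, ext_24 t, ext_25 t, ext_26 t⟩
  intro p q hpq
  by_cases h : col p = 7 ∨ col q = 7
  · have := cov_bdry p q hpq h
    simp only [List.mem_cons, Prod.mk.injEq, List.not_mem_nil, or_false] at this
    rcases this with ⟨rfl, rfl⟩ | ⟨rfl, rfl⟩ | ⟨rfl, rfl⟩ | ⟨rfl, rfl⟩
    · rw [ext_24, ext_of t 0 (by decide +kernel)]
      exact_mod_cast t.2.1 _
    · rw [ext_25, ext_of t 9 (by decide +kernel)]
      exact_mod_cast t.2.2.2.2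
    · rw [ext_25, ext_of t 13 (by decide +kernel)]
      exact_mod_cast t.2.2.2.1
    · rw [ext_26, ext_of t 23 (by decide +kernel)]
      positivity
  · push Not at h
    have hp := (posn_mem p).mpr h.1
    have hq := (posn_mem q).mpr h.2
    rw [ext_of t p hp, ext_of t q hq]
    have h1 := (cov_step p q h.1 h.2).mp hpq
    have := t.2.2.1 ⟨posn q, hq⟩ ⟨posn p, hp⟩ (Relation.ReflTransGen.single ⟨hp, hq, h1.1, h1.2⟩)
    exact_mod_cast this

lemma ext_injective : Function.Injective (ext : L6ab a b → Fin 27 → ℤ) := by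
  intro s t h
  apply Subtype.ext
  funext x
  obtain ⟨x, hx⟩ := x
  obtain ⟨p, rfl⟩ := posn_surj x hx
  have := congrFun h p
  rw [ext_of s p hx, ext_of t p hx] at this
  exact_mod_cast this

lemma le_24 {c : Fin 27 → ℤ} (hc : Mono c) (n : ℕ) : ∀ p, rkk p = n → c p ≤ c 24 := by
  induction n using Nat.strong_induction_on with
  | _ n ih =>
    intro p hp
    by_cases h : p = 24
    · rw [h]
    · obtain ⟨q, hq⟩ := has_lower p h
      have h1 := hc q p hq
      simp only [cov, Bool.and_eq_true, beq_iff_eq] at hq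
      exact h1.trans (ih (rkk q) (by omega) q rfl)

lemma ge_26 {c : Fin 27 → ℤ} (hc : Mono c) (n : ℕ) : ∀ p, 16 - rkk p = n → c 26 ≤ c p := by
  induction n using Nat.strong_induction_on with
  | _ n ih =>
    intro p hp
    by_cases h : p = 26
    · rw [h]
    · obtain ⟨q, hq⟩ := has_upper p h
      have h1 := hc p q hq
      simp only [cov, Bool.and_eq_true, beq_iff_eq] at hq
      have := rkk_le q
      exact (ih (16 - rkk q) (by omega) q rfl).trans h1

lemma V.nonneg {c : Fin 27 → ℤ} (hc : V a b c) (p : Fin 27) : 0 ≤ c p :=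
  hc.2.2.2 ▸ ge_26 hc.1 _ p rfl
lemma V.le {c : Fin 27 → ℤ} (hc : V a b c) (p : Fin 27) : c p ≤ (a : ℤ) + b :=
  hc.2.1 ▸ le_24 hc.1 _ p rfl

lemma ext_surj {c : Fin 27 → ℤ} (hc : V a b c) : ∃ t : L6ab a b, ext t = c := by
  choose idx hidx using fun x : {x // x ∈ pos24} => posn_surj x.1 x.2
  have hcol : ∀ x, col (idx x) ≠ 7 := fun x => (posn_mem _).mp (by rw [hidx]; exact x.2)
  have hid : ∀ p (h : posn p ∈ pos24), idx ⟨posn p, h⟩ = p := fun p h =>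
    posn_inj _ _ (hcol _) (hidx _)
  have hord : ∀ u v, CL.ple adj6 pos24 u v → ∀ (hu : u ∈ pos24) (hv : v ∈ pos24),
      c (idx ⟨v, hv⟩) ≤ c (idx ⟨u, hu⟩) := by
    intro u v huv
    induction huv with
    | refl => intro _ _; exact le_rfl
    | @tail w v _ hs ih =>
      intro hu hv
      refine le_trans ?_ (ih hu hs.1)
      apply hc.1
      rw [cov_step _ _ (hcol _) (hcol _), hidx, hidx]
      exact hs.2.2
  have h13 : idx ⟨(m1, 8), by decide⟩ = 13 := hid 13 (by decide +kernel)
  have h9 : idx ⟨(m1, 6), by decide⟩ = 9 := hid 9 (by decide +kernel)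
  obtain ⟨t, ht⟩ : ∃ t : L6ab a b, ∀ x, t.1 x = (c (idx x)).toNat := by
    refine ⟨⟨fun x => (c (idx x)).toNat, ?_, ?_, ?_⟩, fun _ => rfl⟩
    · intro x
      have := hc.le (idx x)
      show (c (idx x)).toNat ≤ a + b
      omega
    · intro x y hxy
      exact Int.toNat_le_toNat (hord y.1 x.1 hxy y.2 x.2)
    · have k1 := hc.1 25 13 (by decide +kernel)
      have k2 := hc.1 9 25 (by decide +kernel)
      have k3 := hc.2.2.1
      constructor
      · show (c (idx _)).toNat ≤ a
        rw [h13]; omega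
      · show a ≤ (c (idx _)).toNat
        rw [h9]; omega
  refine ⟨t, ?_⟩
  · funext p
    by_cases h : posn p ∈ pos24
    · rw [ext_of _ p h, ht, hid, Int.toNat_of_nonneg (hc.nonneg p)]
    · have := col7 p (by by_contra h'; exact h ((posn_mem p).mpr h'))
      rcases this with rfl | rfl | rfl
      · rw [ext_24, hc.2.1]
      · rw [ext_25, hc.2.2.1]
      · rw [ext_26, hc.2.2.2]

lemma rk_eq (t : L6ab a b) : ((CL.rk t : ℕ) : ℤ) = ∑ p ∈ PP, ext t p := by
  unfold CL.rk
  rw [Nat.cast_sum]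
  symm
  refine Finset.sum_bij (fun p hp => ⟨posn p, (posn_mem p).mpr (mem_PP.mp hp)⟩) ?_ ?_ ?_ ?_
  · intro p hp
    exact Finset.mem_attach _ _
  · intro p hp q hq h
    exact posn_inj p q (mem_PP.mp hp) (congrArg Subtype.val h)
  · rintro ⟨x, hx⟩ _
    obtain ⟨p, rfl⟩ := posn_surj x hx
    exact ⟨p, mem_PP.mpr ((posn_mem p).mp hx), rfl⟩
  · intro p hp
    exact ext_of t p _

/-- Positions weakly below the one of color 1 and rank 6. -/
def DD : Finset (Fin 27) := {0, 1, 2, 3, 4, 5, 7, 9}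
/-- Positions weakly above the one of color 1 and rank 8. -/
def EE : Finset (Fin 27) := {13, 15, 17, 19, 20, 21, 22, 23}

lemma V.ge_a {c : Fin 27 → ℤ} (hc : V a b c) (p : Fin 27) (hp : p ∈ DD) : (a : ℤ) ≤ c p := by
  have h := hc.2.2.1
  have k9 := hc.1 9 25 (by decide +kernel)
  have k7 := hc.1 7 9 (by decide +kernel)
  have k5 := hc.1 5 7 (by decide +kernel)
  have k4 := hc.1 4 5 (by decide +kernel)
  have k3 := hc.1 3 5 (by decide +kernel)
  have k2 := hc.1 2 3 (by decide +kernel)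
  have k1 := hc.1 1 2 (by decide +kernel)
  have k0 := hc.1 0 1 (by decide +kernel)
  simp only [DD, Finset.mem_insert, Finset.mem_singleton] at hp
  rcases hp with rfl | rfl | rfl | rfl | rfl | rfl | rfl | rfl <;> linarith

lemma V.le_a {c : Fin 27 → ℤ} (hc : V a b c) (p : Fin 27) (hp : p ∈ EE) : c p ≤ (a : ℤ) := by
  have h := hc.2.2.1
  have k9 := hc.1 25 13 (by decide +kernel)
  have k7 := hc.1 13 15 (by decide +kernel)
  have k5 := hc.1 15 17 (by decide +kernel)
  have k4 := hc.1 17 19 (by decide +kernel)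
  have k3 := hc.1 17 20 (by decide +kernel)
  have k2 := hc.1 19 21 (by decide +kernel)
  have k1 := hc.1 21 22 (by decide +kernel)
  have k0 := hc.1 22 23 (by decide +kernel)
  simp only [EE, Finset.mem_insert, Finset.mem_singleton] at hp
  rcases hp with rfl | rfl | rfl | rfl | rfl | rfl | rfl | rfl <;> linarith

lemma card_DD : (PP.filter (· ∈ DD)).card = 8 := by decide +kernel
lemma card_EE : (PP.filter (· ∈ EE)).card = 8 := by decide +kernel
lemma card_EE' : (PP.filter (· ∉ EE)).card = 16 := by decide +kernel

lemma rk_ge (t : L6ab a b) : 8 * a ≤ CL.rk t := by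
  have h : ∑ p ∈ PP, (if p ∈ DD then (a : ℤ) else 0) ≤ ∑ p ∈ PP, ext t p := by
    apply Finset.sum_le_sum
    intro p _
    split_ifs with hp
    · exact (ext_valid t).ge_a p hp
    · exact (ext_valid t).nonneg p
  rw [← rk_eq, ← Finset.sum_filter, Finset.sum_const, card_DD] at h
  simp only [nsmul_eq_mul] at h
  push_cast at h
  omega

lemma rk_le (t : L6ab a b) : CL.rk t ≤ 16 * (a + b) + 8 * a := by
  have h : ∑ p ∈ PP, ext t p ≤ ∑ p ∈ PP, (if p ∈ EE then (a : ℤ) else (a : ℤ) + b) := by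
    apply Finset.sum_le_sum
    intro p _
    split_ifs with hp
    · exact (ext_valid t).le_a p hp
    · exact (ext_valid t).le p
  rw [← rk_eq, Finset.sum_ite, Finset.sum_const, Finset.sum_const, card_EE, card_EE'] at h
  simp only [nsmul_eq_mul] at h
  push_cast at h
  omega

lemma cov_low : ∀ p q, cov p q = true → (q ≠ 24 ∧ (q ∈ DD ∨ q = 25 → p = 24 ∨ p ∈ DD ∨ p = 25)) := by
  decide +kernel

lemma min_exists (a b : ℕ) : ∃ t : L6ab a b, CL.rk t = 8 * a := by
  have hV : V a b (fun p => if p = 24 then (a : ℤ) + b else if p ∈ DD ∨ p = 25 then (a : ℤ) else 0) := by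
    refine ⟨?_, ?_, ?_, ?_⟩
    · intro p q hpq
      obtain ⟨h1, h2⟩ := cov_low p q hpq
      simp only [if_neg h1]
      by_cases h3 : q ∈ DD ∨ q = 25
      · rw [if_pos h3]
        rcases h2 h3 with h | h
        · rw [if_pos h]; omega
        · rw [if_pos h]; split_ifs <;> omega
      · rw [if_neg h3]
        split_ifs <;> omega
    · simp
    · simp
    · have h1 : ¬ ((26 : Fin 27) = 24) := by decide
      have h2 : ¬ ((26 : Fin 27) ∈ DD ∨ (26 : Fin 27) = 25) := by decide +kernel
      show (if (26 : Fin 27) = 24 then (a : ℤ) + b else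
        if (26 : Fin 27) ∈ DD ∨ (26 : Fin 27) = 25 then (a : ℤ) else 0) = 0
      rw [if_neg h1, if_neg h2]
  obtain ⟨t, ht⟩ := ext_surj hV
  refine ⟨t, ?_⟩
  have h := rk_eq t
  rw [ht] at h
  have h2 : ∀ p ∈ PP, (if p = 24 then (a : ℤ) + b else if p ∈ DD ∨ p = 25 then (a : ℤ) else 0) =
      if p ∈ DD then (a : ℤ) else 0 := by
    intro p hp
    have n1 : p ≠ 24 := by rintro rfl; exact mem_PP.mp hp (by decide +kernel)
    have n2 : p ≠ 25 := by rintro rfl; exact mem_PP.mp hp (by decide +kernel)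
    simp [n1, n2]
  rw [Finset.sum_congr rfl h2, ← Finset.sum_filter, Finset.sum_const, card_DD] at h
  simp only [nsmul_eq_mul] at h
  push_cast at h
  omega

lemma rho0_eq (a b : ℕ) : rho0 a b = 8 * a := by
  obtain ⟨t, ht⟩ := min_exists a b
  apply le_antisymm
  · rw [← ht]
    exact Nat.sInf_le ⟨t, rfl⟩
  · apply le_csInf (Set.range_nonempty_iff_nonempty.mpr ⟨t⟩)
    rintro _ ⟨s, rfl⟩
    exact rk_ge s

lemma sum_ext (c : Fin 27 → ℤ) (g : ℝ) [Decidable (V a b c)] :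
    ∑ r : L6ab a b, (if ext r = c then g else 0) = if V a b c then g else 0 := by
  by_cases h : V a b c
  · obtain ⟨t, rfl⟩ := ext_surj h
    rw [if_pos h, Finset.sum_eq_single t]
    · rw [if_pos rfl]
    · intro r _ hr
      rw [if_neg (fun h => hr (ext_injective h))]
    · intro h; exact absurd (Finset.mem_univ _) h
  · rw [if_neg h]
    apply Finset.sum_eq_zero
    intro r _
    rw [if_neg]
    rintro rfl
    exact h (ext_valid r)

/-- The raising operator. -/
def XX (a b : ℕ) : Matrix (L6ab a b) (L6ab a b) ℝ := fun s t =>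
  ∑ p ∈ PP, if ext s = ext t + e p then √(U (ext t) p) else 0

open Classical in
lemma XXt (s s' : L6ab a b) : (XX a b * (XX a b).transpose) s s' =
    ∑ p ∈ PP, ∑ q ∈ PP, if ext s' + e p = ext s + e q then
      (if V a b (ext s - e p) then √(U (ext s - e p) p) * √(U (ext s - e p) q) else 0) else 0 := by
  rw [Matrix.mul_apply]
  have h1 : ∀ r, XX a b s r * (XX a b).transpose r s' = ∑ p ∈ PP, ∑ q ∈ PP,
      if ext r = ext s - e p then (if ext s' + e p = ext s + e q then
        √(U (ext s - e p) p) * √(U (ext s - e p) q) else 0) else 0 := by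
    intro r
    rw [Matrix.transpose_apply]
    unfold XX
    rw [Finset.sum_mul_sum]
    refine Finset.sum_congr rfl fun p _ => Finset.sum_congr rfl fun q _ => ?_
    by_cases h : ext s = ext r + e p
    · have h' : ext r = ext s - e p := by rw [h]; abel
      rw [if_pos h, if_pos h', ← h']
      by_cases h2 : ext s' = ext r + e q
      · rw [if_pos h2, if_pos (by rw [h2, h]; abel)]
      · rw [if_neg h2, if_neg, mul_zero]
        intro h3
        apply h2
        rw [h] at h3
        have : ext s' = ext r + e p + e q - e p := by rw [← h3]; abel
        rw [this]; abel
    · have h' : ¬ (ext r = ext s - e p) := fun h' => h (by rw [h']; abel)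
      rw [if_neg h, if_neg h', zero_mul]
  rw [Finset.sum_congr rfl fun r _ => h1 r, Finset.sum_comm]
  refine Finset.sum_congr rfl fun p _ => ?_
  rw [Finset.sum_comm]
  refine Finset.sum_congr rfl fun q _ => ?_
  rw [sum_ext]
  split_ifs <;> rfl

open Classical in
lemma XtX (s s' : L6ab a b) : ((XX a b).transpose * XX a b) s s' =
    ∑ p ∈ PP, ∑ q ∈ PP, if ext s' + e p = ext s + e q then
      (if V a b (ext s + e q) then √(U (ext s) q) * √(U (ext s') p) else 0) else 0 := by
  rw [Matrix.mul_apply]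
  have h1 : ∀ r, (XX a b).transpose s r * XX a b r s' = ∑ p ∈ PP, ∑ q ∈ PP,
      if ext r = ext s + e q then (if ext s' + e p = ext s + e q then
        √(U (ext s) q) * √(U (ext s') p) else 0) else 0 := by
    intro r
    rw [Matrix.transpose_apply]
    unfold XX
    rw [Finset.sum_mul_sum, Finset.sum_comm]
    refine Finset.sum_congr rfl fun p _ => Finset.sum_congr rfl fun q _ => ?_
    by_cases h : ext r = ext s + e q
    · rw [if_pos h, if_pos h]
      by_cases h2 : ext r = ext s' + e p
      · rw [if_pos h2, if_pos (by rw [← h2, h])]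
      · rw [if_neg h2, if_neg, mul_zero]
        intro h3
        exact h2 (by rw [h3, h])
    · rw [if_neg h, if_neg h, zero_mul]
  rw [Finset.sum_congr rfl fun r _ => h1 r, Finset.sum_comm]
  refine Finset.sum_congr rfl fun p _ => ?_
  rw [Finset.sum_comm]
  refine Finset.sum_congr rfl fun q _ => ?_
  rw [sum_ext]
  split_ifs <;> rfl

lemma e_self (p : Fin 27) : e p p = 1 := Pi.single_eq_same _ _
lemma e_ne {p q : Fin 27} (h : q ≠ p) : e p q = 0 := Pi.single_eq_of_ne h _
lemma e_const (p : Fin 27) (hp : p ∈ PP) : e p 24 = 0 ∧ e p 25 = 0 ∧ e p 26 = 0 := by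
  have h := mem_PP.mp hp
  refine ⟨e_ne ?_, e_ne ?_, e_ne ?_⟩ <;> rintro rfl <;> exact h (by decide +kernel)

lemma V_add {c : Fin 27 → ℤ} (hc : V a b c) (p : Fin 27) (hp : p ∈ PP) :
    V a b (c + e p) ↔ Mono (c + e p) := by
  obtain ⟨h1, h2, h3⟩ := e_const p hp
  obtain ⟨_, k1, k2, k3⟩ := hc
  refine ⟨fun h => h.1, fun h => ⟨h, ?_, ?_, ?_⟩⟩ <;> simp [*]

lemma V_sub {c : Fin 27 → ℤ} (hc : V a b c) (p : Fin 27) (hp : p ∈ PP) :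
    V a b (c - e p) ↔ Mono (c - e p) := by
  obtain ⟨h1, h2, h3⟩ := e_const p hp
  obtain ⟨_, k1, k2, k3⟩ := hc
  refine ⟨fun h => h.1, fun h => ⟨h, ?_, ?_, ?_⟩⟩ <;> simp [*]

lemma mono_down {c : Fin 27 → ℤ} {p q : Fin 27} (hpq : p ≠ q) (h1 : Mono (c + e p))
    (h2 : Mono (c + e q)) : Mono c ∧ Mono (c + e p + e q) := by
  constructor
  · intro x y hxy
    have k1 := h1 x y hxy
    have k2 := h2 x y hxy
    simp only [Pi.add_apply] at k1 k2
    by_cases hx : x = p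
    · have : e q x = 0 := e_ne (by rw [hx]; exact hpq)
      have : 0 ≤ e q y := by
        by_cases hy : y = q
        · rw [hy, e_self]; omega
        · rw [e_ne hy]
      omega
    · have : e p x = 0 := e_ne hx
      have : 0 ≤ e p y := by
        by_cases hy : y = p
        · rw [hy, e_self]; omega
        · rw [e_ne hy]
      omega
  · intro x y hxy
    have k1 := h1 x y hxy
    have k2 := h2 x y hxy
    simp only [Pi.add_apply] at k1 k2 ⊢
    by_cases hy : y = p
    · have : e q y = 0 := e_ne (by rw [hy]; exact hpq)
      have : 0 ≤ e q x := by
        by_cases hx : x = q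
        · rw [hx, e_self]; omega
        · rw [e_ne hx]
      omega
    · have : e p y = 0 := e_ne hy
      have : 0 ≤ e p x := by
        by_cases hx : x = p
        · rw [hx, e_self]; omega
        · rw [e_ne hx]
      omega

lemma e_inj {p q : Fin 27} (h : e p = e q) : p = q := by
  by_contra hne
  have := congrFun h p
  rw [e_self, e_ne hne] at this
  omega

open Classical in
lemma offdiag (s s' : L6ab a b) (p q : Fin 27) (hp : p ∈ PP) (hq : q ∈ PP) (hpq : p ≠ q)
    (h : ext s' + e p = ext s + e q) :
    (if V a b (ext s - e p) then √(U (ext s - e p) p) * √(U (ext s - e p) q) else 0) =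
    (if V a b (ext s + e q) then √(U (ext s) q) * √(U (ext s') p) else 0) := by
  obtain ⟨c, hc⟩ : ∃ c, c = ext s - e p := ⟨_, rfl⟩
  have hs : ext s = c + e p := by rw [hc]; abel
  have hs' : ext s' = c + e q := by
    have : ext s' = ext s + e q - e p := by rw [← h]; abel
    rw [this, hs]; abel
  have v1 := ext_valid s
  have v2 := ext_valid s'
  have m := mono_down hpq (hs ▸ v1.1) (hs' ▸ v2.1)
  rw [if_pos ((V_sub v1 p hp).mpr (hc ▸ m.1)), if_pos ((V_add v1 q hq).mpr (by rw [hs]; exact m.2)),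
    ← hc, hs, hs']
  rw [← Real.sqrt_mul (U_nonneg c m.1 p (mem_PP.mp hp)),
    ← Real.sqrt_mul (U_nonneg _ (hs ▸ v1.1) q (mem_PP.mp hq)), diamond c p q hpq, mul_comm]

open Classical in
lemma commutator : XX a b * (XX a b).transpose - (XX a b).transpose * XX a b =
    Matrix.diagonal fun t => 2 * ((CL.rk t - rho0 a b : ℕ) : ℝ) - ((16 * (a + b) : ℕ) : ℝ) := by
  ext s s'
  rw [Matrix.sub_apply, XXt, XtX, ← Finset.sum_sub_distrib]
  have h1 : ∀ p ∈ PP, (∑ q ∈ PP, (if ext s' + e p = ext s + e q then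
      (if V a b (ext s - e p) then √(U (ext s - e p) p) * √(U (ext s - e p) q) else 0) else 0)) -
      (∑ q ∈ PP, (if ext s' + e p = ext s + e q then
      (if V a b (ext s + e q) then √(U (ext s) q) * √(U (ext s') p) else 0) else 0)) =
      if s = s' then U (ext s - e p) p - U (ext s) p else 0 := by
    intro p hp
    rw [← Finset.sum_sub_distrib, Finset.sum_eq_single p]
    · by_cases hss : s = s'
      · subst hss
        have v1 := ext_valid s
        rw [if_pos rfl, if_pos rfl, if_pos rfl]
        congr 1
        · by_cases h : V a b (ext s - e p)
          · rw [if_pos h, Real.mul_self_sqrt (U_nonneg _ h.1 p (mem_PP.mp hp))]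
          · rw [if_neg h, U_down_zero _ v1.1 p (fun h' => h ((V_sub v1 p hp).mpr h'))]
        · by_cases h : V a b (ext s + e p)
          · rw [if_pos h, Real.mul_self_sqrt (U_nonneg _ v1.1 p (mem_PP.mp hp))]
          · rw [if_neg h, U_up_zero _ v1.1 p (fun h' => h ((V_add v1 p hp).mpr h'))]
      · have hne : ¬ (ext s' + e p = ext s + e p) := fun h =>
          hss (ext_injective (add_right_cancel h)).symm
        rw [if_neg hne, if_neg hne, if_neg hss, sub_zero]
    · intro q hq hqp
      by_cases h : ext s' + e p = ext s + e q
      · rw [if_pos h, if_pos h, offdiag s s' p q hp hq (Ne.symm hqp) h, sub_self]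
      · rw [if_neg h, if_neg h, sub_zero]
    · intro h; exact absurd hp h
  rw [Finset.sum_congr rfl h1]
  by_cases hss : s = s'
  · subst hss
    have v1 := ext_valid s
    simp only [if_true]
    rw [total_sum _ v1.1 v1.2.2.2, Matrix.diagonal_apply_eq, v1.2.1, v1.2.2.1, rho0_eq,
      ← Int.cast_sum, ← rk_eq, Nat.cast_sub (rk_ge s)]
    push_cast
    ring
  · simp only [if_neg hss, Finset.sum_const_zero]
    rw [Matrix.diagonal_apply_ne _ hss]

lemma XX_supp (s t : L6ab a b) (h : XX a b s t ≠ 0) :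
    CL.elLe t s ∧ CL.rk s - rho0 a b = CL.rk t - rho0 a b + 1 := by
  obtain ⟨p, hp, hne⟩ := Finset.exists_ne_zero_of_sum_ne_zero h
  have hst : ext s = ext t + e p := by
    by_contra h'
    exact hne (if_neg h')
  constructor
  · rintro ⟨x, hx⟩
    obtain ⟨q, rfl⟩ := posn_surj x hx
    have := congrFun hst q
    rw [Pi.add_apply, ext_of s q hx, ext_of t q hx] at this
    have h0 : 0 ≤ e p q := by
      by_cases hy : q = p
      · rw [hy, e_self]; omega
      · rw [e_ne hy]
    omega
  · have h1 := rk_eq s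
    rw [hst] at h1
    simp only [Pi.add_apply] at h1
    rw [Finset.sum_add_distrib, ← rk_eq t, Finset.sum_eq_single p (fun q _ hq => e_ne hq)
      (fun h => absurd hp h), e_self] at h1
    have := rk_ge t
    rw [rho0_eq]
    omega
end E6C

/-- normalized ranks of `L6(a,b)` lie in `{0,…,16(a+b)}`, and `L6(a,b)` is
rank symmetric, rank unimodal, and strongly Sperner. -/
theorem statement_19 (a b : ℕ) :
    (∀ t : L6ab a b, rho0 a b ≤ CL.rk t ∧ CL.rk t - rho0 a b ≤ 16 * (a + b)) ∧
    (∀ i ≤ 16 * (a + b), nrk6 a b i = nrk6 a b (16 * (a + b) - i)) ∧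
    (∃ u ≤ 16 * (a + b),
      (∀ i j, i ≤ j → j ≤ u → nrk6 a b i ≤ nrk6 a b j) ∧
      (∀ i j, u ≤ i → i ≤ j → j ≤ 16 * (a + b) → nrk6 a b j ≤ nrk6 a b i)) ∧
    (∀ m : ℕ, 0 < m → ∀ A : Fin m → Set (L6ab a b),
      (∀ a', ∀ s ∈ A a', ∀ t ∈ A a', s ≠ t → ¬CL.elLe s t ∧ ¬CL.elLe t s) →
      ∃ S : Finset ℕ, S ⊆ Finset.range (16 * (a + b) + 1) ∧ S.card ≤ m ∧
        Nat.card (⋃ a', A a') ≤ ∑ i ∈ S, nrk6 a b i) := by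
  have hbd : ∀ t : L6ab a b, rho0 a b ≤ CL.rk t ∧ CL.rk t - rho0 a b ≤ 16 * (a + b) := by
    intro t
    have h1 := E6C.rk_ge t
    have h2 := E6C.rk_le t
    rw [E6C.rho0_eq]
    omega
  obtain ⟨hup, hdown, hsp⟩ := SLA.peck (α := L6ab a b) CL.elLe (fun t x => le_rfl)
    (fun x y z h1 h2 w => (h1 w).trans (h2 w))
    (fun x y h1 h2 => Subtype.ext (funext fun w => le_antisymm (h1 w) (h2 w)))
    (fun t => CL.rk t - rho0 a b) (16 * (a + b)) (fun t => (hbd t).2) (E6C.XX a b)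
    (fun s t h => E6C.XX_supp s t h) E6C.commutator
  refine ⟨hbd, ?_, ⟨8 * (a + b), by omega, ?_, ?_⟩, ?_⟩
  · intro i hi
    rcases le_total i (16 * (a + b) - i) with h | h
    · exact le_antisymm (hup _ _ h (by omega)) (hdown _ _ h (by omega))
    · exact le_antisymm (hdown _ _ h (by omega)) (hup _ _ h (by omega))
  · intro i j hij hj
    exact hup i j hij (by omega)
  · intro i j hi hij hj
    exact hdown i j hij (by omega)
  · intro m hm A hA
    exact hsp m hm A hA

end
end
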